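/- arXiv:1604.03089 — 2 statements merged into one kernel-verified Lean document; each statement's English description precedes it below -/
import Mathlib

section
/- Let ρ, σ ∈ M_n(ℂ) be positive semidefinite with supp ρ ⊆ supp σ, and let Φ : M_n(ℂ) → M_m(ℂ) be a positive trace-preserving linear map. Then the following are equivalent, where σ^{−1} and Φ(σ)^{−1} denote Moore–Penrose inverses: (a) Ŝ_f(Φ(ρ)‖Φ(σ)) = Ŝ_f(ρ‖σ) for some continuous operator convex function f : [0,∞) → ℝ that is not of the form x ↦ αx + β; (b) Ŝ_f(Φ(ρ)‖Φ(σ)) = Ŝ_f(ρ‖σ) for every continuous operator convex function f : [0,∞) → ℝ; (c) Tr( Φ(ρ) Φ(σ)^{−1} Φ(ρ) ) = Tr( ρ σ^{−1} ρ ); (d) Φ( ρ σ^{−1} ρ ) = Φ(ρ) Φ(σ)^{−1} Φ(ρ). -/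
open Matrix
open scoped ComplexOrder

/-- Moore–Penrose power of a matrix: apply `x ↦ x ^ t` to the nonzero eigenvalues
(with `0 ^ t := 0`) via the continuous functional calculus. -/
noncomputable def mpow {n : ℕ} (A : Matrix (Fin n) (Fin n) ℂ) (t : ℝ) :
    Matrix (Fin n) (Fin n) ℂ :=
  cfc (fun x : ℝ => if x = 0 then 0 else x ^ t) A

/-- `f : (0,∞) → ℝ` is operator convex. -/
def OperatorConvexOn (f : ℝ → ℝ) : Prop :=
  ∀ (m : ℕ) (A B : Matrix (Fin m) (Fin m) ℂ), A.PosDef → B.PosDef →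
    ∀ t : ℝ, 0 ≤ t → t ≤ 1 →
      (t • cfc f A + (1 - t) • cfc f B - cfc f (t • A + (1 - t) • B)).PosSemidef

/-- The maximal `f`-divergence `Ŝ_f(ρ‖σ) = Tr(σ^{1/2} f(σ^{-1/2} ρ σ^{-1/2}) σ^{1/2})`,
with Moore–Penrose inverse square roots. -/
noncomputable def maxSf {n : ℕ} (f : ℝ → ℝ) (ρ σ : Matrix (Fin n) (Fin n) ℂ) : ℝ :=
  (Matrix.trace (mpow σ (1/2) *
    cfc f (mpow σ (-(1/2)) * ρ * mpow σ (-(1/2))) * mpow σ (1/2))).re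

/-!
Diagonalizing `σ^(-1/2) ρ σ^(-1/2)` writes `σ = ∑ F i` and `ρ = ∑ x i • F i` with `F i` positive and
`Ŝ_f(ρ‖σ) = ∑ f (x i) Tr (F i)` for every `f`. Such a decomposition (a reverse test) is mapped by
`Φ` to a reverse test of `(Φ ρ, Φ σ)` with the same classical divergence, so the question is when
the image is still optimal. For operator convex `f` optimality of a reverse test is equality in the
operator Jensen inequality for the POVM `σ^(-1/2) F i σ^(-1/2)`, and for strictly convex `f` this
equality means `ρ σ⁻¹ F i = x i • F i` for all `i`, a condition that does not depend on `f`.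
Everything in the theorem reduces to this condition for the image `Φ (F i)`, taking `f = x²` for the
two statements about `ρ σ⁻¹ ρ`.

A non-affine operator convex function is automatically strictly convex: if it were affine on a
segment, a `2 × 2` Jensen inequality saturated in one diagonal entry would bound it above by the
corresponding affine function on the whole half-line, and convexity would force equality.
-/

section Development

open scoped MatrixOrder

section FunctionalCalculus

open Polynomial

variable {𝕜 κ κ' : Type*} [RCLike 𝕜] [Fintype κ] [DecidableEq κ] [Fintype κ'] [DecidableEq κ']

lemma aeval_mul_eq_mul_aeval {A : Matrix κ κ 𝕜} {B : Matrix κ' κ' 𝕜} {V : Matrix κ κ' 𝕜}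
    (h : A * V = V * B) (p : ℝ[X]) : aeval A p * V = V * aeval B p := by
  have hpow (k : ℕ) : A ^ k * V = V * B ^ k := by
    induction k with
    | zero => simp
    | succ k ih =>
      rw [pow_succ, Matrix.mul_assoc, h, ← Matrix.mul_assoc, ih, Matrix.mul_assoc, pow_succ]
  induction p using Polynomial.induction_on' with
  | add p q hp hq => rw [map_add, map_add, Matrix.add_mul, Matrix.mul_add, hp, hq]
  | monomial k a => simp [aeval_monomial, Algebra.algebraMap_eq_smul_one, hpow]

lemma cfc_eq_aeval_interpolate {A : Matrix κ κ 𝕜} (hA : A.IsHermitian) (f : ℝ → ℝ) {s : Finset ℝ}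
    (hs : spectrum ℝ A ⊆ s) : cfc f A = aeval A (Lagrange.interpolate s id f) := by
  rw [← cfc_polynomial _ A hA.isSelfAdjoint]
  exact cfc_congr fun x hx =>
    (Lagrange.eval_interpolate_at_node f Function.injective_id.injOn (hs hx)).symm

lemma cfc_mul_eq_mul_cfc {A : Matrix κ κ 𝕜} {B : Matrix κ' κ' 𝕜} {V : Matrix κ κ' 𝕜}
    (hA : A.IsHermitian) (hB : B.IsHermitian) (h : A * V = V * B) (f : ℝ → ℝ) :
    cfc f A * V = V * cfc f B := by
  have hfin := A.finite_real_spectrum.union B.finite_real_spectrum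
  rw [cfc_eq_aeval_interpolate hA f (s := hfin.toFinset) (by simp),
    cfc_eq_aeval_interpolate hB f (s := hfin.toFinset) (by simp)]
  exact aeval_mul_eq_mul_aeval h _

lemma cfc_mulVec_of_mulVec_eq_smul {A : Matrix κ κ 𝕜} {v : κ → 𝕜} {x : ℝ} (hA : A.IsHermitian)
    (h : A *ᵥ v = x • v) (f : ℝ → ℝ) : cfc f A *ᵥ v = f x • v := by
  have hscalar : (algebraMap ℝ (Matrix Unit Unit 𝕜) x).IsHermitian :=
    IsSelfAdjoint.algebraMap _ (.all x)
  have hcol : A * replicateCol Unit v =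
      replicateCol Unit v * algebraMap ℝ (Matrix Unit Unit 𝕜) x := by
    rw [← replicateCol_mulVec, h, replicateCol_smul, Algebra.algebraMap_eq_smul_one,
      Matrix.mul_smul, Matrix.mul_one]
  have hcfc := cfc_mul_eq_mul_cfc hA hscalar hcol f
  rwa [cfc_algebraMap, Algebra.algebraMap_eq_smul_one, Matrix.mul_smul, Matrix.mul_one,
    ← replicateCol_mulVec, ← replicateCol_smul, replicateCol_inj] at hcfc

lemma cfc_mul_of_mul_eq_smul {ι : Type*} {A : Matrix κ κ 𝕜} {V : Matrix κ ι 𝕜} {x : ℝ}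
    (hA : A.IsHermitian) (h : A * V = x • V) (f : ℝ → ℝ) : cfc f A * V = f x • V := by
  ext i j
  have hcol : A *ᵥ V.col j = x • V.col j := funext fun k => congrFun (congrFun h k) j
  exact congrFun (cfc_mulVec_of_mulVec_eq_smul hA hcol f) i

lemma cfc_eq_sum_smul {ι : Type*} [Fintype ι] {A : Matrix κ κ 𝕜} {x : ι → ℝ}
    {p : ι → Matrix κ κ 𝕜} (hA : A.IsHermitian) (hp : ∑ i, p i = 1)
    (h : ∀ i, A * p i = x i • p i) (f : ℝ → ℝ) : cfc f A = ∑ i, f (x i) • p i := by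
  rw [← mul_one (cfc f A), ← hp, Finset.mul_sum]
  exact Finset.sum_congr rfl fun i _ => cfc_mul_of_mul_eq_smul hA (h i) f

lemma cfc_diagonal_ofReal (f : ℝ → ℝ) (d : κ → ℝ) :
    cfc f (diagonal fun i => (d i : 𝕜)) = diagonal fun i => (f (d i) : 𝕜) := by
  have hd : (diagonal fun i => (d i : 𝕜)).IsHermitian := by
    simp [isHermitian_diagonal_iff, isSelfAdjoint_iff]
  have hsingle (c : ℝ) (i : κ) : (Matrix.single i i (c : 𝕜)) = c • Matrix.single i i 1 := by
    rw [Matrix.smul_single, RCLike.real_smul_eq_coe_mul, mul_one]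
  rw [cfc_eq_sum_smul (x := d) (p := fun i => Matrix.single i i 1) hd]
  · simp only [← Matrix.sum_single_eq_diagonal, hsingle]
  · exact Matrix.sum_single_eq_diagonal 1
  · intro i
    rw [← hsingle]
    ext a b
    by_cases ha : i = a
    · subst ha
      simp [Matrix.diagonal_mul, Matrix.single_apply]
    · simp [Matrix.diagonal_mul, ha]

lemma cfc_sq {A : Matrix κ κ 𝕜} (hA : A.IsHermitian) : cfc (fun x : ℝ => x ^ 2) A = A ^ 2 :=
  cfc_pow_id A 2 hA.isSelfAdjoint

end FunctionalCalculus

lemma posSemidef_sum_smul {𝕜 κ ι : Type*} [RCLike 𝕜] [Fintype ι] {E : ι → Matrix κ κ 𝕜}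
    (hE : ∀ i, (E i).PosSemidef) {x : ι → ℝ} (hx : ∀ i, 0 ≤ x i) : (∑ i, x i • E i).PosSemidef :=
  posSemidef_sum _ fun i _ => (hE i).smul (hx i)

section Expectation

variable {𝕜 κ : Type*} [RCLike 𝕜] [Fintype κ]

/-- The expectation `Re ⟨v, A v⟩` of `A` in the state `v`, as an `ℝ`-linear functional of `A`. -/
def expectation (v : κ → 𝕜) : Matrix κ κ 𝕜 →ₗ[ℝ] ℝ where
  toFun A := RCLike.re (star v ⬝ᵥ A *ᵥ v)
  map_add' A B := by simp [add_mulVec]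
  map_smul' a A := by simp [smul_mulVec, RCLike.smul_re]

lemma expectation_apply (v : κ → 𝕜) (A : Matrix κ κ 𝕜) :
    expectation v A = RCLike.re (star v ⬝ᵥ A *ᵥ v) := rfl

lemma expectation_one [DecidableEq κ] {v : κ → 𝕜} (hv : star v ⬝ᵥ v = 1) : expectation v 1 = 1 := by
  simp [expectation_apply, hv]

lemma expectation_single [DecidableEq κ] (A : Matrix κ κ 𝕜) (i : κ) :
    expectation (Pi.single i 1) A = RCLike.re (A i i) := by
  simp [expectation_apply]

lemma expectation_of_mulVec_eq_smul {v : κ → 𝕜} {A : Matrix κ κ 𝕜} {t : ℝ}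
    (hv : star v ⬝ᵥ v = 1) (h : A *ᵥ v = t • v) : expectation v A = t := by
  simp [expectation_apply, h, hv, RCLike.smul_re]

lemma expectation_nonneg {A : Matrix κ κ 𝕜} (hA : A.PosSemidef) (v : κ → 𝕜) :
    0 ≤ expectation v A :=
  hA.re_dotProduct_nonneg v

lemma expectation_eq_zero_iff {A : Matrix κ κ 𝕜} (hA : A.PosSemidef) (v : κ → 𝕜) :
    expectation v A = 0 ↔ A *ᵥ v = 0 := by
  rw [← hA.dotProduct_mulVec_zero_iff, expectation_apply]
  have him := (RCLike.nonneg_iff.1 (hA.dotProduct_mulVec_nonneg v)).2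
  exact ⟨fun hre => RCLike.ext (by simpa using hre) (by simpa using him), fun h => by simp [h]⟩

end Expectation

section POVM

variable {𝕜 κ ι : Type*} [RCLike 𝕜] [Fintype κ] [DecidableEq κ] [Fintype ι]

/-- A positive operator-valued measure on a finite outcome set: positive semidefinite matrices
summing to the identity. -/
structure IsPOVM (E : ι → Matrix κ κ 𝕜) : Prop where
  posSemidef : ∀ i, (E i).PosSemidef
  sum_eq_one : ∑ i, E i = 1

lemma IsPOVM.sum_expectation {E : ι → Matrix κ κ 𝕜} (hE : IsPOVM E) {v : κ → 𝕜}
    (hv : star v ⬝ᵥ v = 1) : ∑ i, expectation v (E i) = 1 := by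
  rw [← map_sum, hE.sum_eq_one, expectation_one hv]

lemma star_eigenvectorBasis_dotProduct_self {A : Matrix κ κ 𝕜} (hA : A.IsHermitian) (i : κ) :
    star ⇑(hA.eigenvectorBasis i) ⬝ᵥ ⇑(hA.eigenvectorBasis i) = 1 := by
  rw [dotProduct_comm, ← EuclideanSpace.inner_eq_star_dotProduct, inner_self_eq_norm_sq_to_K,
    hA.eigenvectorBasis.norm_eq_one]
  simp

lemma sum_vecMulVec_eigenvectorBasis {A : Matrix κ κ 𝕜} (hA : A.IsHermitian) :
    ∑ i, vecMulVec ⇑(hA.eigenvectorBasis i) (star ⇑(hA.eigenvectorBasis i)) = 1 := by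
  rw [← mem_unitaryGroup_iff.1 hA.eigenvectorUnitary.2]
  ext a b
  simp [Matrix.sum_apply, vecMulVec_apply, mul_apply, star_apply]

lemma exists_isPOVM_mul_eq_eigenvalues_smul {A : Matrix κ κ 𝕜} (hA : A.IsHermitian) :
    ∃ p : κ → Matrix κ κ 𝕜, IsPOVM p ∧ ∀ i, A * p i = hA.eigenvalues i • p i := by
  refine ⟨_, ⟨fun i => posSemidef_vecMulVec_self_star _, sum_vecMulVec_eigenvectorBasis hA⟩,
    fun i => ?_⟩
  rw [mul_vecMulVec, hA.mulVec_eigenvectorBasis]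
  exact smul_vecMulVec _ _ _

/-- The Peierls–Bogoliubov form of Jensen's inequality. -/
lemma map_expectation_le_expectation_cfc {f : ℝ → ℝ} {s : Set ℝ} (hf : ConvexOn ℝ s f)
    {A : Matrix κ κ 𝕜} (hA : A.IsHermitian) (hs : spectrum ℝ A ⊆ s) {v : κ → 𝕜}
    (hv : star v ⬝ᵥ v = 1) : f (expectation v A) ≤ expectation v (cfc f A) := by
  obtain ⟨p, hp, hAp⟩ := exists_isPOVM_mul_eq_eigenvalues_smul hA
  have hcfc (g : ℝ → ℝ) :
      expectation v (cfc g A) = ∑ i, expectation v (p i) • g (hA.eigenvalues i) := by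
    simp only [cfc_eq_sum_smul hA hp.sum_eq_one hAp, map_sum, map_smul, smul_eq_mul, mul_comm]
  have hid : expectation v A = ∑ i, expectation v (p i) • hA.eigenvalues i := by
    simpa only [id, cfc_id' ℝ A hA.isSelfAdjoint] using hcfc fun x => x
  rw [hid, hcfc]
  exact hf.map_sum_le (fun i _ => expectation_nonneg (hp.posSemidef i) v) (hp.sum_expectation hv)
    fun i _ => hs (hA.eigenvalues_mem_spectrum_real i)

end POVM

section OperatorJensen

variable {f : ℝ → ℝ} {κ ι : Type*} [Fintype κ] [DecidableEq κ] [Fintype ι]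

lemma OperatorConvexOn.cfc_midpoint_conj_le (hf : OperatorConvexOn f) {k : ℕ}
    {D U : Matrix (Fin k) (Fin k) ℂ} (hD : D.PosDef) (hU : U.IsHermitian) (hUU : U * U = 1) :
    cfc f ((2⁻¹ : ℝ) • (D + U * D * U)) ≤ (2⁻¹ : ℝ) • (cfc f D + U * cfc f D * U) := by
  have hUDU : (U * D * U).PosDef := by
    have hinj : Function.Injective U.mulVec :=
      Function.LeftInverse.injective (g := U.mulVec) fun v => by simp [hUU]
    simpa only [hU.eq] using hD.conjTranspose_mul_mul_same hinj
  have hcomm : cfc f (U * D * U) * U = U * cfc f D :=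
    cfc_mul_eq_mul_cfc hUDU.1 hD.1 (by rw [Matrix.mul_assoc _ U U, hUU, Matrix.mul_one]) f
  have hconj : cfc f (U * D * U) = U * cfc f D * U := by
    rw [← hcomm, Matrix.mul_assoc _ U U, hUU, Matrix.mul_one]
  have h := hf k D (U * D * U) hD hUDU 2⁻¹ (by norm_num) (by norm_num)
  rw [show (1 - 2⁻¹ : ℝ) = 2⁻¹ by norm_num, ← smul_add, ← smul_add, hconj] at h
  exact Matrix.le_iff.2 h

/- Averaging `X` with its conjugate by the reflection `U = 2 V Vᴴ - 1` makes it block diagonal with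
respect to the range of `V`. -/
lemma exists_reflection_of_isometry {k : Type*} [Fintype k] [DecidableEq k] {V : Matrix k κ ℂ}
    (hV : Vᴴ * V = 1) : ∃ U : Matrix k k ℂ, U.IsHermitian ∧ U * U = 1 ∧
      ∀ X : Matrix k k ℂ, ((2⁻¹ : ℝ) • (X + U * X * U)) * V = V * (Vᴴ * X * V) := by
  set U : Matrix k k ℂ := (2 : ℝ) • (V * Vᴴ) - 1 with hUdef
  have hUV : U * V = V := by
    simp only [hUdef, Matrix.sub_mul, Matrix.smul_mul, Matrix.mul_assoc, hV, Matrix.mul_one,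
      Matrix.one_mul]
    module
  have hUU : U * U = 1 := by
    conv_lhs => enter [2]; rw [hUdef]
    rw [Matrix.mul_sub, Matrix.mul_smul, ← Matrix.mul_assoc, hUV, Matrix.mul_one, hUdef]
    module
  refine ⟨U, by simp [hUdef, IsHermitian, conjTranspose_smul], hUU, fun X => ?_⟩
  rw [Matrix.smul_mul, Matrix.add_mul, Matrix.mul_assoc _ U V, hUV, Matrix.mul_assoc U]
  simp only [hUdef, Matrix.sub_mul, Matrix.smul_mul, Matrix.mul_assoc, Matrix.one_mul]
  module

lemma OperatorConvexOn.cfc_conj_isometry_le (hf : OperatorConvexOn f) {k : ℕ}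
    {D : Matrix (Fin k) (Fin k) ℂ} (hD : D.PosDef) {V : Matrix (Fin k) κ ℂ} (hV : Vᴴ * V = 1) :
    cfc f (Vᴴ * D * V) ≤ Vᴴ * cfc f D * V := by
  obtain ⟨U, hU, hUU, hUV⟩ := exists_reflection_of_isometry hV
  set M : Matrix (Fin k) (Fin k) ℂ := (2⁻¹ : ℝ) • (D + U * D * U)
  have hUDU : (U * D * U).IsHermitian := by
    simpa only [hU.eq] using isHermitian_conjTranspose_mul_mul U hD.1
  have hM : M.IsHermitian := (hD.1.add hUDU).smul (by simp [isSelfAdjoint_iff])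
  have hfM : cfc f M * V = V * cfc f (Vᴴ * D * V) :=
    cfc_mul_eq_mul_cfc hM (isHermitian_conjTranspose_mul_mul V hD.1) (hUV D) f
  calc cfc f (Vᴴ * D * V) = Vᴴ * cfc f M * V := by
        rw [Matrix.mul_assoc _ (cfc f M), hfM, ← Matrix.mul_assoc, hV, Matrix.one_mul]
    _ ≤ Vᴴ * ((2⁻¹ : ℝ) • (cfc f D + U * cfc f D * U)) * V := by
        have h := (Matrix.le_iff.1 (hf.cfc_midpoint_conj_le hD hU hUU)).conjTranspose_mul_mul_same V
        rwa [Matrix.mul_sub, Matrix.sub_mul, ← Matrix.le_iff] at h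
    _ = Vᴴ * cfc f D * V := by
        rw [Matrix.mul_assoc, hUV, ← Matrix.mul_assoc, hV, Matrix.one_mul]

/-- Naimark dilation of a POVM to a projective measurement. -/
lemma IsPOVM.exists_dilation {κ : Type*} [Finite κ] [DecidableEq κ] {E : ι → Matrix κ κ ℂ}
    (hE : IsPOVM E) :
    ∃ (k : ℕ) (V : Matrix (Fin k) κ ℂ) (e : Fin k → ι), Vᴴ * V = 1 ∧
      ∀ g : ι → ℝ, Vᴴ * diagonal (fun j => (g (e j) : ℂ)) * V = ∑ i, g i • E i := by
  cases nonempty_fintype κ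
  choose K hK using fun i => CStarAlgebra.nonneg_iff_eq_star_mul_self.1 (hE.posSemidef i).nonneg
  let e : Fin (Fintype.card (ι × κ)) ≃ ι × κ := (Fintype.equivFin _).symm
  let V : Matrix (Fin (Fintype.card (ι × κ))) κ ℂ := .of fun j b => K (e j).1 (e j).2 b
  have hV (g : ι → ℝ) : Vᴴ * diagonal (fun j => (g (e j).1 : ℂ)) * V = ∑ i, g i • E i := by
    ext a b
    rw [mul_apply, Matrix.sum_apply]
    simp only [mul_diagonal, conjTranspose_apply, V, Matrix.of_apply]
    rw [e.sum_comp (fun p : ι × κ => star (K p.1 p.2 a) * (g p.1 : ℂ) * K p.1 p.2 b),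
      Fintype.sum_prod_type]
    refine Finset.sum_congr rfl fun i _ => ?_
    rw [hK, Matrix.smul_apply, mul_apply, Finset.smul_sum]
    refine Finset.sum_congr rfl fun j _ => ?_
    rw [star_apply, Complex.real_smul]
    ring
  exact ⟨_, V, fun j => (e j).1, by simpa [hE.sum_eq_one] using hV 1, hV⟩

lemma OperatorConvexOn.cfc_sum_smul_le_of_pos (hf : OperatorConvexOn f) {E : ι → Matrix κ κ ℂ}
    (hE : IsPOVM E) {x : ι → ℝ} (hx : ∀ i, 0 < x i) :
    cfc f (∑ i, x i • E i) ≤ ∑ i, f (x i) • E i := by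
  obtain ⟨k, V, e, hV, hdil⟩ := hE.exists_dilation
  have hD : (diagonal fun j => (x (e j) : ℂ)).PosDef :=
    posDef_diagonal_iff.2 fun j => by exact_mod_cast hx (e j)
  have hfD : cfc f (diagonal fun j => (x (e j) : ℂ)) = diagonal fun j => (f (x (e j)) : ℂ) :=
    cfc_diagonal_ofReal f fun j => x (e j)
  have h := hf.cfc_conj_isometry_le hD hV
  rwa [hfD, hdil x, hdil fun i => f (x i)] at h

lemma isClosed_setOf_posSemidef {𝕜 κ : Type*} [RCLike 𝕜] :
    IsClosed {A : Matrix κ κ 𝕜 | A.PosSemidef} := by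
  have h : {A : Matrix κ κ 𝕜 | A.PosSemidef} = {A | Aᴴ = A} ∩
      ⋂ v : κ →₀ 𝕜, {A | 0 ≤ v.sum fun i a => v.sum fun j b => star a * A i j * b} := by
    ext A
    simp [Matrix.PosSemidef, IsHermitian]
  rw [h]
  refine .inter (isClosed_eq (by fun_prop) continuous_id) (isClosed_iInter fun v => ?_)
  refine isClosed_le continuous_const ?_
  simp only [Finsupp.sum]
  fun_prop

open Filter Topology in
lemma OperatorConvexOn.cfc_sum_smul_le (hf : OperatorConvexOn f)
    (hc : ContinuousOn f (Set.Ici 0)) {E : ι → Matrix κ κ ℂ} (hE : IsPOVM E) {x : ι → ℝ}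
    (hx : ∀ i, 0 ≤ x i) : cfc f (∑ i, x i • E i) ≤ ∑ i, f (x i) • E i := by
  set T := ∑ i, x i • E i with hTdef
  have hT : T.PosSemidef := posSemidef_sum_smul hE.posSemidef hx
  obtain ⟨p, hp, hTp⟩ := exists_isPOVM_mul_eq_eigenvalues_smul hT.1
  set t := hT.1.eigenvalues
  have hshift (ε : ℝ) : cfc f (∑ i, (x i + ε) • E i) = ∑ j, f (t j + ε) • p j := by
    have hTε : ∑ i, (x i + ε) • E i = T + ε • 1 := by
      simp only [add_smul, Finset.sum_add_distrib, ← Finset.smul_sum, hE.sum_eq_one, hTdef]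
    have hherm : (T + ε • 1).IsHermitian :=
      hT.1.add (isHermitian_one.smul (by simp [isSelfAdjoint_iff]))
    rw [hTε]
    exact cfc_eq_sum_smul hherm hp.sum_eq_one (fun j => by simp [add_mul, hTp, add_smul]) f
  have hlim {y : ℝ} (hy : 0 ≤ y) : Tendsto (fun ε => f (y + ε)) (𝓝[>] 0) (𝓝 (f y)) := by
    refine (hc y hy).tendsto.comp (tendsto_nhdsWithin_iff.2 ⟨?_, ?_⟩)
    · exact ((continuous_const_add y).tendsto' 0 y (add_zero y)).mono_left nhdsWithin_le_nhds
    · filter_upwards [self_mem_nhdsWithin] with ε hε using add_nonneg hy (le_of_lt hε)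
  have htendsto : Tendsto (fun ε => ∑ i, f (x i + ε) • E i - ∑ j, f (t j + ε) • p j) (𝓝[>] 0)
      (𝓝 (∑ i, f (x i) • E i - ∑ j, f (t j) • p j)) :=
    (tendsto_finsetSum _ fun i _ => (hlim (hx i)).smul_const _).sub
      (tendsto_finsetSum _ fun j _ => (hlim (hT.eigenvalues_nonneg j)).smul_const _)
  rw [Matrix.le_iff, cfc_eq_sum_smul hT.1 hp.sum_eq_one hTp]
  refine isClosed_setOf_posSemidef.mem_of_tendsto htendsto ?_
  filter_upwards [self_mem_nhdsWithin] with ε hε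
  rw [← hshift]
  exact Matrix.le_iff.1 <|
    hf.cfc_sum_smul_le_of_pos hE fun i => add_pos_of_nonneg_of_pos (hx i) hε

end OperatorJensen

section StrictConvexity

variable {f : ℝ → ℝ}

lemma OperatorConvexOn.convexOn (hf : OperatorConvexOn f) (hc : ContinuousOn f (Set.Ici 0)) :
    ConvexOn ℝ (Set.Ici 0) f := by
  refine ⟨convex_Ici 0, fun p hp q hq a b ha hb hab => ?_⟩
  have hE : IsPOVM ![a • (1 : Matrix Unit Unit ℂ), b • 1] := by
    refine ⟨Fin.forall_fin_two.2 ⟨PosSemidef.one.smul ha, PosSemidef.one.smul hb⟩, ?_⟩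
    simp [← add_smul, hab]
  have hsum (x : Fin 2 → ℝ) : ∑ i, x i • ![a • (1 : Matrix Unit Unit ℂ), b • 1] i =
      algebraMap ℝ _ (a * x 0 + b * x 1) := by
    simp [Algebra.algebraMap_eq_smul_one, smul_smul, add_smul, mul_comm]
  have hJ := hf.cfc_sum_smul_le hc hE (x := ![p, q]) (Fin.forall_fin_two.2 ⟨hp, hq⟩)
  rw [hsum, hsum fun i => f (![p, q] i), cfc_algebraMap, Matrix.le_iff, ← map_sub] at hJ
  simpa [expectation_apply, Algebra.algebraMap_eq_smul_one] using expectation_nonneg hJ 1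

/- The lower right entry is the mean of `y 0` and `y 1`, the off-diagonal entry is nonzero when
`y 0 ≠ y 1`, and `y 2` is left free to adjust the upper left entry. -/
lemma exists_isPOVM_fin_two {a b k : ℝ} (ha : 0 ≤ a) (hb : 0 ≤ b) (hab : a + b = 1)
    (hk : a * b * k ^ 2 ≤ 1) :
    ∃ E : Fin 3 → Matrix (Fin 2) (Fin 2) ℂ, IsPOVM E ∧ ∀ y : Fin 3 → ℝ, ∑ i, y i • E i =
      !![((a * b * k ^ 2 * (b * y 0 + a * y 1) + (1 - a * b * k ^ 2) * y 2 : ℝ) : ℂ),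
          ((a * b * k * (y 0 - y 1) : ℝ) : ℂ);
        ((a * b * k * (y 0 - y 1) : ℝ) : ℂ), ((a * y 0 + b * y 1 : ℝ) : ℂ)] := by
  let w (u v : ℝ) : Matrix (Fin 2) (Fin 2) ℂ := !![(u : ℂ) * u, u * v; u * v, (v : ℂ) * v]
  have hw (u v : ℝ) : (w u v).PosSemidef := by
    convert posSemidef_vecMulVec_self_star ![(u : ℂ), v] using 1
    ext i j
    fin_cases i <;> fin_cases j <;> simp [w, vecMulVec_apply, mul_comm]
  obtain rfl : b = 1 - a := by linarith
  refine ⟨![a • w (k * (1 - a)) 1, (1 - a) • w (k * a) (-1), (1 - a * (1 - a) * k ^ 2) • w 1 0],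
    ⟨fun i => ?_, ?_⟩, fun y => ?_⟩
  · fin_cases i
    exacts [(hw _ _).smul ha, (hw _ _).smul hb, (hw _ _).smul (sub_nonneg.2 hk)]
  all_goals
    ext i j
    fin_cases i <;> fin_cases j <;> simp [Fin.sum_univ_three, w] <;> ring

lemma apply_eq_zero_of_diag_nonpos {𝕜 κ : Type*} [RCLike 𝕜] [Finite κ] {A : Matrix κ κ 𝕜}
    (hA : A.PosSemidef) {i : κ} (h : RCLike.re (A i i) ≤ 0) (j : κ) : A j i = 0 := by
  classical
  cases nonempty_fintype κ
  have hzero : expectation (Pi.single i 1) A = 0 :=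
    le_antisymm (by rwa [expectation_single]) (expectation_nonneg hA _)
  simpa using congrFun ((expectation_eq_zero_iff hA _).1 hzero) j

/- Saturation at `z` forces the second column of `cfc f T`; commutation with `T` then determines the
remaining entry. -/
lemma le_chord_of_cfc_le (hf : ConvexOn ℝ (Set.Ici 0) f) {c s z d s' z' : ℝ}
    (hT : (!![(c : ℂ), s; s, z]).PosSemidef) (hs : s ≠ 0)
    (hle : cfc f !![(c : ℂ), s; s, z] ≤ !![(d : ℂ), s'; s', z']) (hz : z' ≤ f z) :
    f c ≤ z' + s' / s * (c - z) := by
  set T : Matrix (Fin 2) (Fin 2) ℂ := !![(c : ℂ), s; s, z] with hTdef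
  set F := cfc f T
  have hpeierls (i : Fin 2) : f (RCLike.re (T i i)) ≤ RCLike.re (F i i) := by
    simpa only [expectation_single] using
      map_expectation_le_expectation_cfc hf hT.1
        (fun x hx => spectrum_nonneg_of_nonneg hT.nonneg hx) (v := Pi.single i 1) (by simp)
  have hf_c : f c ≤ (F 0 0).re := by simpa [hTdef] using hpeierls 0
  have hf_z : f z ≤ (F 1 1).re := by simpa [hTdef] using hpeierls 1
  have hcol (j : Fin 2) := apply_eq_zero_of_diag_nonpos (Matrix.le_iff.1 hle) (i := 1)
    (by simpa using hz.trans hf_z) j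
  have hF01 : F 0 1 = s' := by simpa [sub_eq_zero] using (sub_eq_zero.1 (hcol 0)).symm
  have hF11 : F 1 1 = z' := by simpa [sub_eq_zero] using (sub_eq_zero.1 (hcol 1)).symm
  have hcomm : F * T = T * F := cfc_mul_eq_mul_cfc hT.1 hT.1 rfl f
  have hentry : (F 0 0).re * s + s' * z = c * s' + s * z' := by
    simpa [mul_apply, Fin.sum_univ_two, hTdef, hF01, hF11] using
      congrArg Complex.re (congrFun (congrFun hcomm 0) 1)
  have hF00 : (F 0 0).re = z' + s' / s * (c - z) := by
    field_simp
    linarith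
  exact hF00 ▸ hf_c

lemma OperatorConvexOn.le_chord (hf : OperatorConvexOn f) (hcont : ContinuousOn f (Set.Ici 0))
    {p q a b c : ℝ} (hp : 0 ≤ p) (hq : 0 ≤ q) (hpq : p ≠ q) (ha : 0 < a) (hb : 0 < b)
    (hab : a + b = 1) (heq : a * f p + b * f q ≤ f (a * p + b * q)) (hc : 0 < c) :
    f c ≤ a * f p + b * f q + (f p - f q) / (p - q) * (c - (a * p + b * q)) := by
  have hy : 0 ≤ b * p + a * q := by positivity
  set μ := c / (c + (b * p + a * q) + 1) with hμ
  have hμpos : 0 < μ := by positivity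
  have hμlt : μ < 1 := (div_lt_one (by positivity)).2 (by linarith)
  have hμy : μ * (b * p + a * q) ≤ c := by
    rw [hμ, div_mul_eq_mul_div, div_le_iff₀ (by positivity)]
    nlinarith
  set k := √(μ / (a * b))
  have hk : a * b * k ^ 2 = μ := by
    rw [Real.sq_sqrt (by positivity)]
    field_simp
  have habk : 0 < a * b * k := mul_pos (mul_pos ha hb) (Real.sqrt_pos.2 (by positivity))
  obtain ⟨E, hE, hsum⟩ := exists_isPOVM_fin_two ha.le hb.le hab (hk.trans_le hμlt.le)
  set r := (c - μ * (b * p + a * q)) / (1 - μ)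
  have hr : 0 ≤ r := div_nonneg (sub_nonneg.2 hμy) (sub_nonneg.2 hμlt.le)
  have hx (i : Fin 3) : 0 ≤ (![p, q, r] : Fin 3 → ℝ) i := by fin_cases i <;> assumption
  have hT00 : μ * (b * p + a * q) + (1 - μ) * r = c := by
    rw [mul_div_cancel₀ _ (sub_pos.2 hμlt).ne']
    ring
  have hT : ∑ i, (![p, q, r] : Fin 3 → ℝ) i • E i =
      !![(c : ℂ), (a * b * k * (p - q) : ℝ); (a * b * k * (p - q) : ℝ), (a * p + b * q : ℝ)] := by
    rw [hsum, hk]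
    simp [← hT00]
  have hs : a * b * k * (p - q) ≠ 0 := mul_ne_zero habk.ne' (sub_ne_zero.2 hpq)
  have hTpos := posSemidef_sum_smul hE.posSemidef hx
  have hJ := hf.cfc_sum_smul_le hcont hE hx
  rw [hT] at hTpos hJ
  rw [hsum] at hJ
  have h := le_chord_of_cfc_le (hf.convexOn hcont) hTpos hs hJ heq
  rwa [mul_div_mul_left _ _ habk.ne'] at h

lemma OperatorConvexOn.eq_chord (hf : OperatorConvexOn f) (hcont : ContinuousOn f (Set.Ici 0))
    {p q a b : ℝ} (hp : 0 ≤ p) (hq : 0 ≤ q) (hpq : p ≠ q) (ha : 0 < a) (hb : 0 < b)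
    (hab : a + b = 1) (heq : a * f p + b * f q ≤ f (a * p + b * q)) :
    Set.EqOn f (fun c => a * f p + b * f q + (f p - f q) / (p - q) * (c - (a * p + b * q)))
      (Set.Ici 0) := by
  set z := a * p + b * q
  set m := (f p - f q) / (p - q)
  have hz : 0 < z := by
    rcases hp.eq_or_lt with rfl | hp'
    · have : 0 < q := lt_of_le_of_ne hq hpq
      positivity
    · positivity
  have hle {c : ℝ} (hc : 0 < c) : f c ≤ a * f p + b * f q + m * (c - z) :=
    hf.le_chord hcont hp hq hpq ha hb hab heq hc
  -- `z` is a convex combination of `c` and `z ^ 2 / c`, so the upper bound at `z ^ 2 / c` and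
  -- saturation at `z` leave no room below the chord at `c`.
  have hge {c : ℝ} (hc : 0 < c) : a * f p + b * f q + m * (c - z) ≤ f c := by
    have hconv := (hf.convexOn hcont).2 hc.le (div_pos (pow_pos hz 2) hc).le
      (div_pos hz (add_pos hc hz)).le (div_pos hc (add_pos hc hz)).le (by field_simp; ring)
    have hmid : z / (c + z) * c + c / (c + z) * (z ^ 2 / c) = z := by
      field_simp
    have hmirror := hle (div_pos (pow_pos hz 2) hc)
    simp only [smul_eq_mul, hmid] at hconv
    rw [div_mul_eq_mul_div, div_mul_eq_mul_div, ← add_div,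
      le_div_iff₀ (add_pos hc hz)] at hconv
    have hscaled : c * f (z ^ 2 / c) ≤ c * (a * f p + b * f q) + m * z * (z - c) := by
      refine (mul_le_mul_of_nonneg_left hmirror hc.le).trans_eq ?_
      field_simp
    have hsat := mul_le_mul_of_nonneg_right heq (add_pos hc hz).le
    exact le_of_mul_le_mul_left (by linarith) hz
  have hIoi : Set.EqOn f (fun c => a * f p + b * f q + m * (c - z)) (Set.Ioi 0) :=
    fun c hc => le_antisymm (hle hc) (hge hc)
  exact hIoi.of_subset_closure hcont (by fun_prop) Set.Ioi_subset_Ici_self (closure_Ioi (0 : ℝ)).ge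

lemma OperatorConvexOn.strictConvexOn (hf : OperatorConvexOn f)
    (hcont : ContinuousOn f (Set.Ici 0)) (hna : ¬ ∃ p q : ℝ, ∀ x : ℝ, 0 ≤ x → f x = p * x + q) :
    StrictConvexOn ℝ (Set.Ici 0) f := by
  refine ⟨convex_Ici 0, fun p hp q hq hpq a b ha hb hab => ?_⟩
  by_contra! hle
  refine hna ⟨(f p - f q) / (p - q),
    a * f p + b * f q - (f p - f q) / (p - q) * (a * p + b * q), fun x hx => ?_⟩
  rw [hf.eq_chord hcont hp hq hpq ha hb hab hle hx]
  ring

lemma operatorConvexOn_sq : OperatorConvexOn fun x => x ^ 2 := by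
  intro m A B hA hB t ht0 ht1
  have hM : (t • A + (1 - t) • B).IsHermitian :=
    ((hA.posSemidef.smul ht0).add (hB.posSemidef.smul (sub_nonneg.2 ht1))).1
  have hgap : t • A ^ 2 + (1 - t) • B ^ 2 - (t • A + (1 - t) • B) ^ 2 =
      (t * (1 - t)) • ((A - B)ᴴ * (A - B)) := by
    rw [(hA.1.sub hB.1).eq]
    simp only [pow_two, add_mul, mul_add, sub_mul, mul_sub, smul_mul_assoc, mul_smul_comm]
    module
  rw [cfc_sq hA.1, cfc_sq hB.1, cfc_sq hM, hgap]
  exact (posSemidef_conjTranspose_mul_self _).smul (mul_nonneg ht0 (sub_nonneg.2 ht1))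

lemma not_exists_sq_eq_affine : ¬ ∃ p q : ℝ, ∀ x : ℝ, 0 ≤ x → x ^ 2 = p * x + q := by
  rintro ⟨p, q, h⟩
  linarith [h 0 le_rfl, h 1 zero_le_one, h 2 zero_le_two]

end StrictConvexity

section EqualityCase

variable {𝕜 κ ι : Type*} [RCLike 𝕜] [Fintype κ] [DecidableEq κ] [Fintype ι]

lemma IsPOVM.eq_of_mulVec_ne_zero {f : ℝ → ℝ} {s : Set ℝ} (hf : StrictConvexOn ℝ s f)
    {E : ι → Matrix κ κ 𝕜} (hE : IsPOVM E) {x : ι → ℝ} (hx : ∀ i, x i ∈ s) {T : Matrix κ κ 𝕜}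
    (hT : T.IsHermitian) (hsum : ∑ i, x i • E i = T) (heq : ∑ i, f (x i) • E i = cfc f T)
    {v : κ → 𝕜} (hv : star v ⬝ᵥ v = 1) {t : ℝ} (hTv : T *ᵥ v = t • v) {i : ι}
    (hi : E i *ᵥ v ≠ 0) : x i = t := by
  have hmean : ∑ j, expectation v (E j) • x j = t := by
    simpa [← hsum, mul_comm] using expectation_of_mulVec_eq_smul hv hTv
  have hfmean : ∑ j, expectation v (E j) • f (x j) = f t := by
    simpa [← heq, mul_comm] using
      expectation_of_mulVec_eq_smul hv (cfc_mulVec_of_mulVec_eq_smul hT hTv f)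
  have hsat := (hf.map_sum_eq_iff' (t := Finset.univ) (w := fun j => expectation v (E j)) (p := x)
    (fun j _ => expectation_nonneg (hE.posSemidef j) v) (hE.sum_expectation hv)
    fun j _ => hx j).1 (by rw [hmean, hfmean])
  have hwi := (expectation_eq_zero_iff (hE.posSemidef i) v).not.2 hi
  rw [hsat i (Finset.mem_univ i) hwi, hmean]

lemma IsPOVM.mul_eq_smul_of_cfc_eq {f : ℝ → ℝ} {s : Set ℝ} (hf : StrictConvexOn ℝ s f)
    {E : ι → Matrix κ κ 𝕜} (hE : IsPOVM E) {x : ι → ℝ} (hx : ∀ i, x i ∈ s) {T : Matrix κ κ 𝕜}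
    (hT : T.IsHermitian) (hsum : ∑ i, x i • E i = T) (heq : ∑ i, f (x i) • E i = cfc f T)
    (i : ι) : T * E i = x i • E i := by
  have hvec (j : κ) : E i *ᵥ (T *ᵥ ⇑(hT.eigenvectorBasis j)) =
      x i • E i *ᵥ ⇑(hT.eigenvectorBasis j) := by
    rw [hT.mulVec_eigenvectorBasis, mulVec_smul]
    rcases eq_or_ne (E i *ᵥ ⇑(hT.eigenvectorBasis j)) 0 with h0 | h0
    · simp [h0]
    · rw [hE.eq_of_mulVec_ne_zero hf hx hT hsum heq (star_eigenvectorBasis_dotProduct_self hT j)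
        (hT.mulVec_eigenvectorBasis j) h0]
  have hET : E i * T = x i • E i := by
    rw [← mul_one (E i * T), ← mul_one (x i • E i), ← sum_vecMulVec_eigenvectorBasis hT,
      Finset.mul_sum, Finset.mul_sum]
    refine Finset.sum_congr rfl fun j _ => ?_
    rw [mul_vecMulVec, mul_vecMulVec, ← mulVec_mulVec, hvec, smul_mulVec]
  simpa [conjTranspose_mul, conjTranspose_smul, (hE.posSemidef i).1.eq, hT.eq] using
    congrArg conjTranspose hET

end EqualityCase

section MoorePenrosePower

variable {n : ℕ} {ρ σ : Matrix (Fin n) (Fin n) ℂ}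

lemma isHermitian_mpow (σ : Matrix (Fin n) (Fin n) ℂ) (t : ℝ) : (mpow σ t).IsHermitian :=
  cfc_predicate _ σ

lemma mpow_mul_mpow (hσ : σ.PosSemidef) {s t u : ℝ} (h : s + t = u) :
    mpow σ s * mpow σ t = mpow σ u := by
  have hcont (g : ℝ → ℝ) : ContinuousOn g (spectrum ℝ σ) := σ.finite_real_spectrum.continuousOn g
  rw [mpow, mpow, ← cfc_mul _ _ σ (hcont _) (hcont _)]
  refine cfc_congr fun x hx => ?_
  rcases (spectrum_nonneg_of_nonneg hσ.nonneg hx).eq_or_lt with rfl | hpos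
  · simp
  · simp [hpos.ne', ← h, Real.rpow_add hpos]

lemma mpow_one (hσ : σ.PosSemidef) : mpow σ 1 = σ := by
  conv_rhs => rw [← cfc_id ℝ σ hσ.1.isSelfAdjoint]
  refine cfc_congr fun x _ => ?_
  by_cases hx : x = 0 <;> simp [hx]

lemma mpow_mul_self (hσ : σ.PosSemidef) {s u : ℝ} (h : s + 1 = u) : mpow σ s * σ = mpow σ u := by
  simpa only [mpow_one hσ] using mpow_mul_mpow hσ h

lemma mpow_mul_one_sub_mpow_zero (hσ : σ.PosSemidef) (t : ℝ) : mpow σ t * (1 - mpow σ 0) = 0 := by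
  rw [mul_sub, mul_one, mpow_mul_mpow hσ (add_zero t), sub_self]

lemma mul_mpow_zero_of_ker_le (hσ : σ.PosSemidef)
    (h : ∀ v : Fin n → ℂ, σ *ᵥ v = 0 → ρ *ᵥ v = 0) : ρ * mpow σ 0 = ρ := by
  have hσ0 : σ * (1 - mpow σ 0) = 0 := by
    simpa only [mpow_one hσ] using mpow_mul_one_sub_mpow_zero hσ 1
  have hρ0 : ρ * (1 - mpow σ 0) = 0 := by
    refine ext_of_mulVec_single fun j => ?_
    rw [← mulVec_mulVec, zero_mulVec]
    exact h _ (by rw [mulVec_mulVec, hσ0, zero_mulVec])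
  rw [mul_sub, mul_one, sub_eq_zero] at hρ0
  exact hρ0.symm

lemma mpow_zero_mul_of_ker_le (hρ : ρ.IsHermitian) (hσ : σ.PosSemidef)
    (h : ∀ v : Fin n → ℂ, σ *ᵥ v = 0 → ρ *ᵥ v = 0) : mpow σ 0 * ρ = ρ := by
  simpa [hρ.eq, (isHermitian_mpow σ 0).eq] using
    congrArg conjTranspose (mul_mpow_zero_of_ker_le hσ h)

end MoorePenrosePower

section ReverseTest

variable {n m : ℕ} {ι : Type*} [Fintype ι] {f : ℝ → ℝ} {x : ι → ℝ}
  {F : ι → Matrix (Fin n) (Fin n) ℂ} {ρ σ : Matrix (Fin n) (Fin n) ℂ}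

/-- A reverse test of the pair `(ρ, σ)` in the sense of Matsumoto: the preparation `F` generates `σ`
from the classical weights `Tr (F i)` and `ρ` from the weights `x i * Tr (F i)`. The densities
`F i` are kept unnormalized, so that `x` is the classical likelihood ratio. -/
structure IsReverseTest (x : ι → ℝ) (F : ι → Matrix (Fin n) (Fin n) ℂ)
    (ρ σ : Matrix (Fin n) (Fin n) ℂ) : Prop where
  nonneg : ∀ i, 0 ≤ x i
  posSemidef : ∀ i, (F i).PosSemidef
  sum_eq : ∑ i, F i = σ
  sum_smul_eq : ∑ i, x i • F i = ρ

/-- A reverse test whose classical `f`-divergence `∑ i, f (x i) * Tr (F i)` is the maximal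
`f`-divergence. The eigenvalue condition that characterizes this does not mention `f`. -/
structure IsOptimalReverseTest (x : ι → ℝ) (F : ι → Matrix (Fin n) (Fin n) ℂ)
    (ρ σ : Matrix (Fin n) (Fin n) ℂ) : Prop extends IsReverseTest x F ρ σ where
  mul_eq_smul : ∀ i, ρ * mpow σ (-1) * F i = x i • F i

namespace IsReverseTest

lemma posSemidef_left (h : IsReverseTest x F ρ σ) : ρ.PosSemidef :=
  h.sum_smul_eq ▸ posSemidef_sum_smul h.posSemidef h.nonneg

lemma posSemidef_right (h : IsReverseTest x F ρ σ) : σ.PosSemidef :=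
  h.sum_eq ▸ posSemidef_sum _ fun i _ => h.posSemidef i

lemma map (h : IsReverseTest x F ρ σ)
    {Φ : Matrix (Fin n) (Fin n) ℂ →ₗ[ℂ] Matrix (Fin m) (Fin m) ℂ}
    (hΦ : ∀ X, X.PosSemidef → (Φ X).PosSemidef) :
    IsReverseTest x (fun i => Φ (F i)) (Φ ρ) (Φ σ) where
  nonneg := h.nonneg
  posSemidef i := hΦ _ (h.posSemidef i)
  sum_eq := by rw [← map_sum, h.sum_eq]
  sum_smul_eq := by simp only [← LinearMap.map_smul_of_tower, ← map_sum, h.sum_smul_eq]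

lemma mulVec_eq_zero (h : IsReverseTest x F ρ σ) {v : Fin n → ℂ} (hv : σ *ᵥ v = 0) (i : ι) :
    F i *ᵥ v = 0 := by
  have hsum : ∑ j, expectation v (F j) = 0 := by
    rw [← map_sum, h.sum_eq, expectation_eq_zero_iff h.posSemidef_right, hv]
  rw [← expectation_eq_zero_iff (h.posSemidef i)]
  exact (Finset.sum_eq_zero_iff_of_nonneg fun j _ => expectation_nonneg (h.posSemidef j) v).1 hsum i
    (Finset.mem_univ i)

lemma mulVec_left_eq_zero (h : IsReverseTest x F ρ σ) {v : Fin n → ℂ} (hv : σ *ᵥ v = 0) :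
    ρ *ᵥ v = 0 := by
  simp [← h.sum_smul_eq, sum_mulVec, smul_mulVec, h.mulVec_eq_zero hv]

lemma mul_mpow_zero (h : IsReverseTest x F ρ σ) (i : ι) : F i * mpow σ 0 = F i :=
  mul_mpow_zero_of_ker_le h.posSemidef_right fun _ hv => h.mulVec_eq_zero hv i

lemma mpow_zero_mul (h : IsReverseTest x F ρ σ) (i : ι) : mpow σ 0 * F i = F i :=
  mpow_zero_mul_of_ker_le (h.posSemidef i).1 h.posSemidef_right fun _ hv => h.mulVec_eq_zero hv i

lemma mpow_zero_mul_left (h : IsReverseTest x F ρ σ) : mpow σ 0 * ρ = ρ :=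
  mpow_zero_mul_of_ker_le h.posSemidef_left.1 h.posSemidef_right fun _ => h.mulVec_left_eq_zero

end IsReverseTest

lemma posSemidef_mpow_mul_mul_mpow (hρ : ρ.PosSemidef) (σ : Matrix (Fin n) (Fin n) ℂ) (t : ℝ) :
    (mpow σ t * ρ * mpow σ t).PosSemidef := by
  simpa only [(isHermitian_mpow σ t).eq] using hρ.conjTranspose_mul_mul_same (mpow σ t)

lemma exists_isOptimalReverseTest (hρ : ρ.PosSemidef) (hσ : σ.PosSemidef)
    (hsupp : ∀ v : Fin n → ℂ, σ *ᵥ v = 0 → ρ *ᵥ v = 0) :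
    ∃ (x : Fin n → ℝ) (F : Fin n → Matrix (Fin n) (Fin n) ℂ), IsOptimalReverseTest x F ρ σ := by
  set S := mpow σ (1 / 2)
  set R := mpow σ (-(1 / 2))
  have hSR : S * R = mpow σ 0 := mpow_mul_mpow hσ (by norm_num)
  have hRS : R * S = mpow σ 0 := mpow_mul_mpow hσ (by norm_num)
  have hSS : S * S = σ := (mpow_mul_mpow hσ (by norm_num)).trans (mpow_one hσ)
  have hXpos : (R * ρ * R).PosSemidef := posSemidef_mpow_mul_mul_mpow hρ σ _
  obtain ⟨p, hp, hXp⟩ := exists_isPOVM_mul_eq_eigenvalues_smul hXpos.1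
  refine ⟨hXpos.1.eigenvalues, fun i => S * p i * S, ⟨hXpos.eigenvalues_nonneg,
    fun i => posSemidef_mpow_mul_mul_mpow (hp.posSemidef i) σ _, ?_, ?_⟩, fun i => ?_⟩
  · rw [← Finset.sum_mul, ← Finset.mul_sum, hp.sum_eq_one, mul_one, hSS]
  · calc ∑ i, hXpos.1.eigenvalues i • (S * p i * S)
        = S * (∑ i, R * ρ * R * p i) * S := by
          simp only [hXp, Finset.mul_sum, Finset.sum_mul, mul_smul_comm, smul_mul_assoc]
      _ = (S * R) * ρ * (R * S) := by
          rw [← Finset.mul_sum, hp.sum_eq_one, mul_one]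
          simp only [mul_assoc]
      _ = ρ := by
          rw [hSR, hRS, mpow_zero_mul_of_ker_le hρ.1 hσ hsupp, mul_mpow_zero_of_ker_le hσ hsupp]
  · calc ρ * mpow σ (-1) * (S * p i * S)
        = ρ * (mpow σ (-1) * S) * p i * S := by simp only [mul_assoc]
      _ = (S * R) * ρ * R * p i * S := by
          rw [mpow_mul_mpow hσ (show -1 + 1 / 2 = -(1 / 2) by norm_num), hSR,
            mpow_zero_mul_of_ker_le hρ.1 hσ hsupp]
      _ = S * (R * ρ * R * p i) * S := by simp only [mul_assoc]
      _ = hXpos.1.eigenvalues i • (S * p i * S) := by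
          rw [hXp, mul_smul_comm, smul_mul_assoc]

namespace IsOptimalReverseTest

lemma mul_mpow_neg_one_mul (h : IsOptimalReverseTest x F ρ σ) :
    ρ * mpow σ (-1) * ρ = ∑ i, x i ^ 2 • F i := by
  calc ρ * mpow σ (-1) * ρ = ρ * mpow σ (-1) * ∑ i, x i • F i := by rw [h.sum_smul_eq]
    _ = ∑ i, x i ^ 2 • F i := by
      simp only [Finset.mul_sum, mul_smul_comm, h.mul_eq_smul, smul_smul, pow_two]

lemma maxSf_eq (h : IsOptimalReverseTest x F ρ σ) (f : ℝ → ℝ) :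
    maxSf f ρ σ = ∑ i, f (x i) * (F i).trace.re := by
  have hσ := h.posSemidef_right
  set S := mpow σ (1 / 2)
  set R := mpow σ (-(1 / 2))
  have hX : (R * ρ * R).IsHermitian := (posSemidef_mpow_mul_mul_mpow h.posSemidef_left σ _).1
  have heigen (i : ι) : R * ρ * R * (R * F i) = x i • (R * F i) :=
    calc R * ρ * R * (R * F i) = R * (ρ * (R * R) * F i) := by simp only [mul_assoc]
      _ = x i • (R * F i) := by
        rw [mpow_mul_mpow hσ (show -(1 / 2) + -(1 / 2) = -1 by norm_num), h.mul_eq_smul,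
          mul_smul_comm]
  have hS_eq : S = R * σ := (mpow_mul_self hσ (by norm_num)).symm
  have hdecomp : S * cfc f (R * ρ * R) * S = ∑ i, f (x i) • F i := by
    conv_lhs => enter [2]; rw [hS_eq, ← h.sum_eq]
    rw [Finset.mul_sum, Finset.mul_sum]
    refine Finset.sum_congr rfl fun i _ => ?_
    rw [mul_assoc S, cfc_mul_of_mul_eq_smul hX (heigen i), mul_smul_comm, ← mul_assoc,
      mpow_mul_mpow hσ (show 1 / 2 + -(1 / 2) = 0 by norm_num), h.mpow_zero_mul]
  rw [maxSf, hdecomp, trace_sum, Complex.re_sum]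
  simp [trace_smul]

end IsOptimalReverseTest

/-- The family `σ^(-1/2) F i σ^(-1/2)`, completed to a POVM by the projection onto the kernel of `σ`
as the additional outcome `none`. -/
noncomputable def normalizedPOVM (σ : Matrix (Fin n) (Fin n) ℂ)
    (F : ι → Matrix (Fin n) (Fin n) ℂ) : Option ι → Matrix (Fin n) (Fin n) ℂ
  | none => 1 - mpow σ 0
  | some i => mpow σ (-(1 / 2)) * F i * mpow σ (-(1 / 2))

lemma sum_smul_normalizedPOVM (σ : Matrix (Fin n) (Fin n) ℂ) (F : ι → Matrix (Fin n) (Fin n) ℂ)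
    (g : Option ι → ℝ) : ∑ o, g o • normalizedPOVM σ F o = g none • (1 - mpow σ 0) +
      mpow σ (-(1 / 2)) * (∑ i, g (some i) • F i) * mpow σ (-(1 / 2)) := by
  simp [Fintype.sum_option, normalizedPOVM, Finset.mul_sum, Finset.sum_mul]

lemma sum_smul_normalizedPOVM_mul_one_sub (hσ : σ.PosSemidef) (F : ι → Matrix (Fin n) (Fin n) ℂ)
    (g : Option ι → ℝ) :
    (∑ o, g o • normalizedPOVM σ F o) * (1 - mpow σ 0) = g none • (1 - mpow σ 0) := by
  rw [sum_smul_normalizedPOVM, add_mul, mul_assoc _ _ (1 - mpow σ 0),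
    mpow_mul_one_sub_mpow_zero hσ, mul_zero, add_zero, smul_mul_assoc, sub_mul, one_mul,
    mpow_mul_one_sub_mpow_zero hσ, sub_zero]

namespace IsReverseTest

lemma isPOVM_normalizedPOVM (h : IsReverseTest x F ρ σ) : IsPOVM (normalizedPOVM σ F) where
  posSemidef
    | none => by
      have hproj : (1 - mpow σ 0)ᴴ * (1 - mpow σ 0) = 1 - mpow σ 0 := by
        rw [(isHermitian_one.sub (isHermitian_mpow σ 0)).eq, sub_mul, one_mul,
          mpow_mul_one_sub_mpow_zero h.posSemidef_right, sub_zero]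
      rw [normalizedPOVM, ← hproj]
      exact posSemidef_conjTranspose_mul_self _
    | some i => posSemidef_mpow_mul_mul_mpow (h.posSemidef i) σ _
  sum_eq_one := by
    have hone := sum_smul_normalizedPOVM σ F 1
    simp only [Pi.one_apply, one_smul, h.sum_eq] at hone
    have hσ := h.posSemidef_right
    rw [hone, mpow_mul_self hσ (show -(1 / 2) + 1 = 1 / 2 by norm_num),
      mpow_mul_mpow hσ (show 1 / 2 + -(1 / 2) = 0 by norm_num), sub_add_cancel]

lemma mpow_half_mul_normalizedPOVM_mul (h : IsReverseTest x F ρ σ) (i : ι) :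
    mpow σ (1 / 2) * normalizedPOVM σ F (some i) * mpow σ (1 / 2) = F i := by
  have hσ := h.posSemidef_right
  set S := mpow σ (1 / 2)
  set R := mpow σ (-(1 / 2))
  calc S * (R * F i * R) * S = (S * R) * F i * (R * S) := by simp only [mul_assoc]
    _ = F i := by
      rw [mpow_mul_mpow hσ (show 1 / 2 + -(1 / 2) = 0 by norm_num),
        mpow_mul_mpow hσ (show -(1 / 2) + 1 / 2 = 0 by norm_num), h.mpow_zero_mul, h.mul_mpow_zero]

lemma mpow_half_mul_sum_smul_mul (h : IsReverseTest x F ρ σ) (g : Option ι → ℝ) :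
    mpow σ (1 / 2) * (∑ o, g o • normalizedPOVM σ F o) * mpow σ (1 / 2) =
      ∑ i, g (some i) • F i := by
  have hnone : mpow σ (1 / 2) * normalizedPOVM σ F none = 0 :=
    mpow_mul_one_sub_mpow_zero h.posSemidef_right _
  simp only [Fintype.sum_option, mul_add, Finset.mul_sum, Finset.sum_mul, mul_smul_comm,
    smul_mul_assoc, h.mpow_half_mul_normalizedPOVM_mul, hnone, smul_zero, zero_add]

lemma sum_elim_smul_normalizedPOVM (h : IsReverseTest x F ρ σ) :
    ∑ o : Option ι, o.elim 0 x • normalizedPOVM σ F o =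
      mpow σ (-(1 / 2)) * ρ * mpow σ (-(1 / 2)) := by
  simp only [sum_smul_normalizedPOVM, Option.elim, h.sum_smul_eq, zero_smul, zero_add]

end IsReverseTest

lemma mul_eq_zero_of_trace_conj_eq_zero {A B : Matrix (Fin n) (Fin n) ℂ} (hA : A.PosSemidef)
    (h : (Bᴴ * A * B).trace.re = 0) : A * B = 0 := by
  have hpos := hA.conjTranspose_mul_mul_same B
  have htrace : (Bᴴ * A * B).trace = 0 :=
    Complex.ext h (Complex.nonneg_iff.1 hpos.trace_nonneg).2.symm
  obtain ⟨K, rfl⟩ := CStarAlgebra.nonneg_iff_eq_star_mul_self.1 hA.nonneg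
  have hK : (K * B)ᴴ * (K * B) = 0 := by
    rw [← hpos.trace_eq_zero_iff.1 htrace, conjTranspose_mul]
    simp only [star_eq_conjTranspose, mul_assoc]
  rw [mul_assoc, conjTranspose_mul_self_eq_zero.1 hK, mul_zero]

/- The operator Jensen gap is positive; it always vanishes on the kernel of `σ`, and equality of the
divergences says that its compression by `σ^(1/2)` is traceless. -/
lemma IsReverseTest.sum_map_smul_eq_cfc_of_maxSf_eq (h : IsReverseTest x F ρ σ)
    (hf : OperatorConvexOn f) (hc : ContinuousOn f (Set.Ici 0))
    (heq : maxSf f ρ σ = ∑ i, f (x i) * (F i).trace.re) :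
    ∑ o : Option ι, f (o.elim 0 x) • normalizedPOVM σ F o =
      cfc f (mpow σ (-(1 / 2)) * ρ * mpow σ (-(1 / 2))) := by
  have hσ := h.posSemidef_right
  set S := mpow σ (1 / 2)
  set R := mpow σ (-(1 / 2))
  set Y := ∑ o : Option ι, f (o.elim 0 x) • normalizedPOVM σ F o with hY
  have hX : (R * ρ * R).IsHermitian := (posSemidef_mpow_mul_mul_mpow h.posSemidef_left σ _).1
  have hgap : (Y - cfc f (R * ρ * R)).PosSemidef := by
    have hJ := hf.cfc_sum_smul_le hc h.isPOVM_normalizedPOVM (x := fun o => o.elim 0 x)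
      (Option.rec le_rfl h.nonneg)
    rwa [h.sum_elim_smul_normalizedPOVM, Matrix.le_iff] at hJ
  have hker : (Y - cfc f (R * ρ * R)) * (1 - mpow σ 0) = 0 := by
    have hX0 : R * ρ * R * (1 - mpow σ 0) = (0 : ℝ) • (1 - mpow σ 0) := by
      rw [mul_assoc, mpow_mul_one_sub_mpow_zero hσ, mul_zero, zero_smul]
    rw [sub_mul, cfc_mul_of_mul_eq_smul hX hX0, hY,
      sum_smul_normalizedPOVM_mul_one_sub hσ F fun o => f (o.elim 0 x), Option.elim, sub_self]
  have hrange : (Y - cfc f (R * ρ * R)) * S = 0 := by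
    refine mul_eq_zero_of_trace_conj_eq_zero hgap ?_
    have htrace : (∑ i, f (x i) • F i).trace.re = maxSf f ρ σ := by
      simp [heq, trace_sum, trace_smul]
    rw [(isHermitian_mpow σ _).eq, mul_sub, sub_mul, trace_sub, Complex.sub_re, hY,
      h.mpow_half_mul_sum_smul_mul fun o => f (o.elim 0 x)]
    exact sub_eq_zero.2 htrace
  rw [mul_sub, mul_one, ← mpow_mul_mpow hσ (show 1 / 2 + -(1 / 2) = (0 : ℝ) by norm_num),
    ← mul_assoc, hrange, zero_mul, sub_zero] at hker
  exact sub_eq_zero.1 hker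

lemma IsReverseTest.isOptimalReverseTest_of_maxSf_eq (h : IsReverseTest x F ρ σ)
    (hf : OperatorConvexOn f) (hc : ContinuousOn f (Set.Ici 0))
    (hna : ¬ ∃ p q : ℝ, ∀ x : ℝ, 0 ≤ x → f x = p * x + q)
    (heq : maxSf f ρ σ = ∑ i, f (x i) * (F i).trace.re) : IsOptimalReverseTest x F ρ σ := by
  refine ⟨h, fun i => ?_⟩
  have hσ := h.posSemidef_right
  set S := mpow σ (1 / 2)
  set R := mpow σ (-(1 / 2))
  set E := normalizedPOVM σ F (some i)
  have heigen : R * ρ * R * E = x i • E :=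
    h.isPOVM_normalizedPOVM.mul_eq_smul_of_cfc_eq (hf.strictConvexOn hc hna)
      (x := fun o => o.elim 0 x) (Option.rec Set.self_mem_Ici h.nonneg)
      (posSemidef_mpow_mul_mul_mpow h.posSemidef_left σ _).1 h.sum_elim_smul_normalizedPOVM
      (h.sum_map_smul_eq_cfc_of_maxSf_eq hf hc heq) (some i)
  have hFi : S * E * S = F i := h.mpow_half_mul_normalizedPOVM_mul i
  calc ρ * mpow σ (-1) * F i = mpow σ 0 * ρ * (mpow σ (-1) * S) * E * S := by
        rw [h.mpow_zero_mul_left, ← hFi]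
        simp only [mul_assoc]
    _ = (S * R) * ρ * R * E * S := by
        rw [mpow_mul_mpow hσ (show -1 + 1 / 2 = -(1 / 2) by norm_num),
          mpow_mul_mpow hσ (show 1 / 2 + -(1 / 2) = 0 by norm_num)]
    _ = S * (R * ρ * R * E) * S := by simp only [mul_assoc]
    _ = x i • F i := by rw [heigen, mul_smul_comm, smul_mul_assoc, hFi]

lemma IsReverseTest.re_trace_mul_mpow_neg_one_mul (h : IsReverseTest x F ρ σ) :
    (ρ * mpow σ (-1) * ρ).trace.re = maxSf (fun x => x ^ 2) ρ σ := by
  obtain ⟨y, G, hopt⟩ := exists_isOptimalReverseTest h.posSemidef_left h.posSemidef_right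
    fun _ => h.mulVec_left_eq_zero
  rw [hopt.mul_mpow_neg_one_mul, hopt.maxSf_eq, trace_sum, Complex.re_sum]
  simp only [trace_smul, Complex.smul_re, smul_eq_mul]

namespace IsOptimalReverseTest

variable {Φ : Matrix (Fin n) (Fin n) ℂ →ₗ[ℂ] Matrix (Fin m) (Fin m) ℂ}

lemma maxSf_map_eq (h : IsOptimalReverseTest x F ρ σ) (hΦtr : ∀ X, (Φ X).trace = X.trace)
    (hmap : IsOptimalReverseTest x (fun i => Φ (F i)) (Φ ρ) (Φ σ)) (f : ℝ → ℝ) :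
    maxSf f (Φ ρ) (Φ σ) = maxSf f ρ σ := by
  simp only [hmap.maxSf_eq, h.maxSf_eq, hΦtr]

lemma map_of_maxSf_map_eq (h : IsOptimalReverseTest x F ρ σ)
    (hΦpos : ∀ X, X.PosSemidef → (Φ X).PosSemidef) (hΦtr : ∀ X, (Φ X).trace = X.trace)
    (hc : ContinuousOn f (Set.Ici 0)) (hf : OperatorConvexOn f)
    (hna : ¬ ∃ p q : ℝ, ∀ x : ℝ, 0 ≤ x → f x = p * x + q)
    (heq : maxSf f (Φ ρ) (Φ σ) = maxSf f ρ σ) :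
    IsOptimalReverseTest x (fun i => Φ (F i)) (Φ ρ) (Φ σ) :=
  (h.map hΦpos).isOptimalReverseTest_of_maxSf_eq hf hc hna <| by
    simp only [heq, h.maxSf_eq, hΦtr]

lemma map_mul_mpow_neg_one_mul (h : IsOptimalReverseTest x F ρ σ)
    (hmap : IsOptimalReverseTest x (fun i => Φ (F i)) (Φ ρ) (Φ σ)) :
    Φ (ρ * mpow σ (-1) * ρ) = Φ ρ * mpow (Φ σ) (-1) * Φ ρ := by
  simp only [h.mul_mpow_neg_one_mul, hmap.mul_mpow_neg_one_mul, map_sum,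
    LinearMap.map_smul_of_tower]

end IsOptimalReverseTest

end ReverseTest

end Development

/-- equivalent characterizations of the preservation of the maximal
`f`-divergence by a positive trace-preserving map. -/
theorem stmt3 {n m : ℕ} (ρ σ : Matrix (Fin n) (Fin n) ℂ)
    (hρ : ρ.PosSemidef) (hσ : σ.PosSemidef)
    (hsupp : ∀ v : Fin n → ℂ, σ *ᵥ v = 0 → ρ *ᵥ v = 0)
    (Φ : Matrix (Fin n) (Fin n) ℂ →ₗ[ℂ] Matrix (Fin m) (Fin m) ℂ)
    (hΦpos : ∀ X, X.PosSemidef → (Φ X).PosSemidef)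
    (hΦtr : ∀ X, (Φ X).trace = X.trace) :
    ((∃ f : ℝ → ℝ, ContinuousOn f (Set.Ici (0 : ℝ)) ∧ OperatorConvexOn f ∧
        (¬ ∃ p q : ℝ, ∀ x : ℝ, 0 ≤ x → f x = p * x + q) ∧
        maxSf f (Φ ρ) (Φ σ) = maxSf f ρ σ)
      ↔ (∀ f : ℝ → ℝ, ContinuousOn f (Set.Ici (0 : ℝ)) → OperatorConvexOn f →
          maxSf f (Φ ρ) (Φ σ) = maxSf f ρ σ))
    ∧ ((∀ f : ℝ → ℝ, ContinuousOn f (Set.Ici (0 : ℝ)) → OperatorConvexOn f →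
          maxSf f (Φ ρ) (Φ σ) = maxSf f ρ σ)
      ↔ Matrix.trace (Φ ρ * mpow (Φ σ) (-1) * Φ ρ)
          = Matrix.trace (ρ * mpow σ (-1) * ρ))
    ∧ ((Matrix.trace (Φ ρ * mpow (Φ σ) (-1) * Φ ρ)
          = Matrix.trace (ρ * mpow σ (-1) * ρ))
      ↔ Φ (ρ * mpow σ (-1) * ρ) = Φ ρ * mpow (Φ σ) (-1) * Φ ρ) := by
  obtain ⟨x, F, htest⟩ := exists_isOptimalReverseTest hρ hσ hsupp
  have hsq_cont : ContinuousOn (fun y : ℝ => y ^ 2) (Set.Ici 0) := (continuous_pow 2).continuousOn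
  have optimal_of_sq (h : maxSf (fun y => y ^ 2) (Φ ρ) (Φ σ) = maxSf (fun y => y ^ 2) ρ σ) :
      IsOptimalReverseTest x (fun i => Φ (F i)) (Φ ρ) (Φ σ) :=
    htest.map_of_maxSf_map_eq hΦpos hΦtr hsq_cont operatorConvexOn_sq not_exists_sq_eq_affine h
  have optimal_of_trace (h : (Φ ρ * mpow (Φ σ) (-1) * Φ ρ).trace = (ρ * mpow σ (-1) * ρ).trace) :
      IsOptimalReverseTest x (fun i => Φ (F i)) (Φ ρ) (Φ σ) :=
    optimal_of_sq <| by rw [← (htest.map hΦpos).re_trace_mul_mpow_neg_one_mul, h,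
      htest.re_trace_mul_mpow_neg_one_mul]
  have trace_of_map (h : Φ (ρ * mpow σ (-1) * ρ) = Φ ρ * mpow (Φ σ) (-1) * Φ ρ) :
      (Φ ρ * mpow (Φ σ) (-1) * Φ ρ).trace = (ρ * mpow σ (-1) * ρ).trace := by rw [← h, hΦtr]
  refine ⟨⟨fun ⟨f, hc, hf, hna, h⟩ g _ _ => ?_, fun h => ?_⟩, ⟨fun h => ?_, fun h f _ _ => ?_⟩,
    fun h => htest.map_mul_mpow_neg_one_mul (optimal_of_trace h), trace_of_map⟩
  · exact htest.maxSf_map_eq hΦtr (htest.map_of_maxSf_map_eq hΦpos hΦtr hc hf hna h) g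
  · exact ⟨_, hsq_cont, operatorConvexOn_sq, not_exists_sq_eq_affine,
      h _ hsq_cont operatorConvexOn_sq⟩
  · exact trace_of_map (htest.map_mul_mpow_neg_one_mul
      (optimal_of_sq (h _ hsq_cont operatorConvexOn_sq)))
  · exact htest.maxSf_map_eq hΦtr (optimal_of_trace h) f
end

section
/- Let ρ, σ ∈ M_n(ℂ) be positive semidefinite with supp ρ ⊆ supp σ. For a continuous convex function f : [0,∞) → ℝ, define the projectively measured f-divergence S_f^{pr}(ρ‖σ) as the supremum, over all projective measurements (P_x)_{x∈X} on ℂ^n, of Σ_{x : Tr(σP_x) > 0} Tr(σP_x) · f( Tr(ρP_x) / Tr(σP_x) ) (the terms with Tr(σP_x) = 0 also have Tr(ρP_x) = 0 and contribute 0). Then ρσ = σρ if and only if S_f(ρ‖σ) = S_f^{pr}(ρ‖σ) holds for every continuous convex function f : [0,∞) → ℝ. -/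
open Matrix
open scoped ComplexOrder

/-- Spectral projection of a Hermitian matrix `A` onto the eigenvalue `a`. -/
noncomputable def specProj {n : ℕ} (A : Matrix (Fin n) (Fin n) ℂ) (a : ℝ) :
    Matrix (Fin n) (Fin n) ℂ :=
  cfc (fun x : ℝ => if x = a then (1 : ℝ) else 0) A

/-- The standard `f`-divergence for positive semidefinite matrices with
`supp ρ ⊆ supp σ`. -/
noncomputable def Sf {n : ℕ} (f : ℝ → ℝ) (ρ σ : Matrix (Fin n) (Fin n) ℂ) : ℝ :=
  ∑ᶠ a ∈ spectrum ℝ ρ, ∑ᶠ b ∈ spectrum ℝ σ,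
    if b = 0 then 0 else
      b * f (a / b) * (Matrix.trace (specProj ρ a * specProj σ b)).re

/-- A projective measurement on `ℂ^n`: a finite family of mutually orthogonal
orthogonal projections summing to the identity. -/
def IsProjMeas {n k : ℕ} (P : Fin k → Matrix (Fin n) (Fin n) ℂ) : Prop :=
  (∀ x, (P x).IsHermitian) ∧ (∀ x, P x * P x = P x) ∧
    (∀ x y, x ≠ y → P x * P y = 0) ∧ ∑ x, P x = 1

/-- The projectively measured `f`-divergence: the supremum over all projective
measurements `(P_x)` of `Σ_{x : Tr(σ P_x) > 0} Tr(σ P_x) · f(Tr(ρ P_x)/Tr(σ P_x))`. -/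
noncomputable def SfPr {n : ℕ} (f : ℝ → ℝ) (ρ σ : Matrix (Fin n) (Fin n) ℂ) : ℝ :=
  sSup {r : ℝ | ∃ (k : ℕ) (P : Fin k → Matrix (Fin n) (Fin n) ℂ), IsProjMeas P ∧
    r = ∑ x, if 0 < (Matrix.trace (σ * P x)).re then
        (Matrix.trace (σ * P x)).re *
          f ((Matrix.trace (ρ * P x)).re / (Matrix.trace (σ * P x)).re)
      else 0}

/-!
If `ρ` and `σ` commute they are diagonal along a common projective measurement, whose classical
divergence is `Sf f ρ σ`; by convexity of the perspective `(a, b) ↦ b f(a / b)` no other measurement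
does better.

For the converse, `f t = t²` suffices. With `L = ρ σ⁻¹` and `H = ∑ x, Tr(ρ P_x) / Tr(σ P_x) • P_x`,
the gap between `Sf f ρ σ` and the value at the measurement `P` is exactly `Tr((H - L) σ (H - L)ᴴ)`,
so a small gap makes `H σ` close to `L σ = ρ`. As `H` is Hermitian, `σ H σ` is then close to both
`σ ρ` and `ρ σ`. This bounds the commutator of `ρ` and `σ` by `Sf f ρ σ - SfPr f ρ σ`, with no need
for the supremum to be attained.
-/

section Perspective

/-- The perspective `(a, b) ↦ b f(a / b)` of `f`. Division by zero being zero, it vanishes at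
`b = 0`, which is the convention for terms of weight zero in an `f`-divergence. -/
noncomputable def perspective (f : ℝ → ℝ) (a b : ℝ) : ℝ :=
  b * f (a / b)

@[simp]
lemma perspective_zero_right (f : ℝ → ℝ) (a : ℝ) : perspective f a 0 = 0 := by
  simp [perspective]

lemma perspective_mul_mul (f : ℝ → ℝ) (a b c : ℝ) :
    perspective f (a * c) (b * c) = perspective f a b * c := by
  rcases eq_or_ne c 0 with rfl | hc
  · simp [perspective]
  · rw [perspective, perspective, mul_div_mul_right a b hc, mul_right_comm]

lemma perspective_sq (a b : ℝ) :
    perspective (fun t => t ^ 2) a b = 2 * (a / b * a) - a / b * (a / b) * b := by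
  rcases eq_or_ne b 0 with rfl | hb
  · simp
  · rw [perspective]
    field_simp
    ring

lemma perspective_sum_le {ι : Type*} {s : Finset ι} {C : Set ℝ} {f : ℝ → ℝ}
    (hf : ConvexOn ℝ C f) {a b : ι → ℝ} (hb : ∀ i ∈ s, 0 ≤ b i)
    (hab : ∀ i ∈ s, b i = 0 → a i = 0) (hC : ∀ i ∈ s, a i / b i ∈ C) :
    perspective f (∑ i ∈ s, a i) (∑ i ∈ s, b i) ≤ ∑ i ∈ s, perspective f (a i) (b i) := by
  obtain hB | hB := (Finset.sum_nonneg hb).eq_or_lt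
  · have hb_zero : ∀ i ∈ s, b i = 0 := (Finset.sum_eq_zero_iff_of_nonneg hb).1 hB.symm
    rw [← hB, perspective_zero_right,
      Finset.sum_eq_zero fun i hi => by rw [hb_zero i hi, perspective_zero_right]]
  · set B := ∑ i ∈ s, b i
    have mean_eq : ∑ i ∈ s, (b i / B) • (a i / b i) = (∑ i ∈ s, a i) / B := by
      rw [Finset.sum_div]
      refine Finset.sum_congr rfl fun i hi => ?_
      rw [smul_eq_mul, div_mul_eq_mul_div, mul_div_cancel_of_imp' (hab i hi)]
    have jensen := hf.map_sum_le (fun i hi => div_nonneg (hb i hi) hB.le)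
      (by rw [← Finset.sum_div, div_self hB.ne']) hC
    calc perspective f (∑ i ∈ s, a i) B
        = B * f (∑ i ∈ s, (b i / B) • (a i / b i)) := by rw [mean_eq, perspective]
      _ ≤ B * ∑ i ∈ s, (b i / B) • f (a i / b i) := by gcongr
      _ = ∑ i ∈ s, perspective f (a i) (b i) := by
        rw [Finset.mul_sum]
        refine Finset.sum_congr rfl fun i _ => ?_
        rw [perspective, smul_eq_mul, ← mul_assoc, mul_div_cancel₀ _ hB.ne']

end Perspective

section Matrix

variable {m 𝕜 : Type*} [Fintype m] [RCLike 𝕜]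

open scoped MatrixOrder in
lemma exists_eq_mul_conjTranspose {A : Matrix m m 𝕜} (hA : A.PosSemidef) :
    ∃ B : Matrix m m 𝕜, A = B * Bᴴ := by
  classical
  exact CStarAlgebra.nonneg_iff_eq_mul_star_self.1 hA.nonneg

lemma trace_mul_nonneg {A B : Matrix m m 𝕜} (hA : A.PosSemidef) (hB : B.PosSemidef) :
    0 ≤ (A * B).trace := by
  obtain ⟨C, rfl⟩ := exists_eq_mul_conjTranspose hB
  rw [← mul_assoc, Matrix.trace_mul_comm, ← mul_assoc]
  exact (hA.conjTranspose_mul_mul_same C).trace_nonneg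

open scoped MatrixOrder in
lemma posSemidef_of_isHermitian_of_isIdempotentElem {P : Matrix m m 𝕜} (hP : P.IsHermitian)
    (hPP : IsIdempotentElem P) : P.PosSemidef := by
  classical
  exact (IsStarProjection.nonneg ⟨hPP, hP⟩).posSemidef

lemma mul_eq_zero_of_mulVec_ker_le {A B : Matrix m m 𝕜}
    (hker : ∀ v : m → 𝕜, A *ᵥ v = 0 → B *ᵥ v = 0) {C : Matrix m m 𝕜} (h : A * C = 0) :
    B * C = 0 := by
  classical
  refine Matrix.ext_of_mulVec_single fun i => ?_
  rw [← Matrix.mulVec_mulVec, Matrix.zero_mulVec]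
  exact hker _ (by rw [Matrix.mulVec_mulVec, h, Matrix.zero_mulVec])

variable [DecidableEq m]

lemma continuousOn_spectrum (A : Matrix m m 𝕜) (g : ℝ → ℝ) : ContinuousOn g (spectrum ℝ A) :=
  A.finite_real_spectrum.continuousOn g

open scoped MatrixOrder in
lemma nonneg_of_mem_spectrum {A : Matrix m m 𝕜} (hA : A.PosSemidef) {x : ℝ}
    (hx : x ∈ spectrum ℝ A) : 0 ≤ x :=
  spectrum_nonneg_of_nonneg hA.nonneg hx

lemma mul_cfc_inv_mul {A : Matrix m m 𝕜} (hA : A.IsHermitian) :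
    A * cfc (fun x : ℝ => x⁻¹) A * A = A := by
  calc A * cfc (fun x : ℝ => x⁻¹) A * A
      = cfc (fun x : ℝ => x) A * cfc (fun x : ℝ => x⁻¹) A * cfc (fun x : ℝ => x) A := by
        rw [cfc_id' ℝ A hA.isSelfAdjoint]
    _ = cfc (fun x : ℝ => x * x⁻¹ * x) A := by
        rw [cfc_mul _ _ A (continuousOn_spectrum A _) (continuousOn_spectrum A _),
          cfc_mul _ _ A (continuousOn_spectrum A _) (continuousOn_spectrum A _)]
    _ = A := by simp only [mul_inv_mul_cancel, cfc_id' ℝ A hA.isSelfAdjoint]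

end Matrix

section SpectralResolution

variable {m ι κ : Type*} [Fintype m] [DecidableEq m] [Fintype ι] [Fintype κ]

/-- `A = ∑ i, a i • E i` is a resolution of `A` along the projective measurement `E`. The `a i`
are neither required to be distinct nor the `E i` to be nonzero, so that commuting matrices can
share the same `E`. -/
structure IsSpectralResolution (A : Matrix m m ℂ) (a : ι → ℝ) (E : ι → Matrix m m ℂ) :
    Prop extends CompleteOrthogonalIdempotents E where
  isHermitian : ∀ i, (E i).IsHermitian
  mul_proj : ∀ i, A * E i = a i • E i

namespace IsSpectralResolution

variable {A B : Matrix m m ℂ} {a : ι → ℝ} {b : κ → ℝ}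
  {E : ι → Matrix m m ℂ} {F : κ → Matrix m m ℂ}

lemma re_trace_mul (h : IsSpectralResolution A a E) (X : Matrix m m ℂ) :
    (A * X).trace.re = ∑ i, a i * (E i * X).trace.re := by
  have expansion : A * X = ∑ i, a i • (E i * X) := by
    calc A * X = A * (∑ i, E i) * X := by rw [h.complete, mul_one]
      _ = ∑ i, a i • (E i * X) := by
        simp only [Finset.mul_sum, Finset.sum_mul, h.mul_proj, Matrix.smul_mul]
  simp only [expansion, Matrix.trace_sum, Complex.re_sum, Matrix.trace_smul, Complex.smul_re,
    smul_eq_mul]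

lemma posSemidef (h : IsSpectralResolution A a E) (i : ι) : (E i).PosSemidef :=
  posSemidef_of_isHermitian_of_isIdempotentElem (h.isHermitian i) (h.idem i)

lemma prod_left (hA : IsSpectralResolution A a E) (hB : IsSpectralResolution B b F)
    (hEF : ∀ i j, Commute (E i) (F j)) :
    IsSpectralResolution A (fun p : ι × κ => a p.1) (fun p => E p.1 * F p.2) where
  toCompleteOrthogonalIdempotents := by
    refine CompleteOrthogonalIdempotents.iff_ortho_complete.2 ⟨fun p q hpq => ?_, ?_⟩
    · change E p.1 * F p.2 * (E q.1 * F q.2) = 0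
      rw [(hEF q.1 p.2).symm.mul_mul_mul_comm]
      by_cases h : p.1 = q.1
      · rw [hB.ortho fun h' => hpq (Prod.ext h h'), mul_zero]
      · rw [hA.ortho h, zero_mul]
    · rw [Fintype.sum_prod_type, ← Fintype.sum_mul_sum, hA.complete, hB.complete, mul_one]
  isHermitian p := ((hA.isHermitian p.1).commute_iff (hB.isHermitian p.2)).1 (hEF p.1 p.2)
  mul_proj p := by rw [← mul_assoc, hA.mul_proj, Matrix.smul_mul]

lemma prod_right (hA : IsSpectralResolution A a E) (hB : IsSpectralResolution B b F)
    (hEF : ∀ i j, Commute (E i) (F j)) :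
    IsSpectralResolution B (fun p : ι × κ => b p.2) (fun p => E p.1 * F p.2) where
  __ := hA.prod_left hB hEF
  mul_proj p := by rw [(hEF p.1 p.2).eq, ← mul_assoc, hB.mul_proj, Matrix.smul_mul]

end IsSpectralResolution

end SpectralResolution

section SpecProj

variable {n : ℕ}

noncomputable instance fintypeSpectrum (A : Matrix (Fin n) (Fin n) ℂ) : Fintype (spectrum ℝ A) :=
  Fintype.ofFinite _

lemma cfc_eq_sum_smul_specProj (A : Matrix (Fin n) (Fin n) ℂ) (g : ℝ → ℝ) :
    cfc g A = ∑ a : spectrum ℝ A, g a • specProj A a := by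
  simp only [specProj, ← cfc_smul _ _ A (continuousOn_spectrum A _)]
  rw [← cfc_sum _ _ _ fun a _ => continuousOn_spectrum A _]
  refine cfc_congr fun x hx => ?_
  rw [Finset.sum_apply, Finset.sum_eq_single ⟨x, hx⟩] <;> aesop

lemma isSpectralResolution_specProj {A : Matrix (Fin n) (Fin n) ℂ} (hA : A.IsHermitian) :
    IsSpectralResolution A (fun a : spectrum ℝ A => (a : ℝ)) (fun a => specProj A a) where
  toCompleteOrthogonalIdempotents := by
    refine CompleteOrthogonalIdempotents.iff_ortho_complete.2 ⟨fun a b hab => ?_, ?_⟩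
    · have indicators_mul : ∀ x : ℝ,
          (if x = a then (1 : ℝ) else 0) * (if x = b then 1 else 0) = 0 := by aesop
      simp only [specProj, indicators_mul, cfc_const_zero,
        ← cfc_mul _ _ A (continuousOn_spectrum A _) (continuousOn_spectrum A _)]
    · simpa only [one_smul, cfc_const_one ℝ A hA.isSelfAdjoint]
        using (cfc_eq_sum_smul_specProj A fun _ => 1).symm
  isHermitian a := cfc_predicate (R := ℝ) (p := IsSelfAdjoint) _ A
  mul_proj a := by
    have mul_indicator : ∀ x : ℝ,
        x * (if x = a then 1 else 0) = (a : ℝ) • (if x = a then (1 : ℝ) else 0) := by aesop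
    calc A * specProj A a
        = cfc (fun x : ℝ => x) A * specProj A a := by rw [cfc_id' ℝ A hA.isSelfAdjoint]
      _ = (a : ℝ) • specProj A a := by
        simp only [specProj, ← cfc_smul _ _ A (continuousOn_spectrum A _), mul_indicator,
          ← cfc_mul _ _ A (continuousOn_spectrum A _) (continuousOn_spectrum A _)]

lemma commute_specProj {A B : Matrix (Fin n) (Fin n) ℂ} (h : Commute A B) (a b : ℝ) :
    Commute (specProj A a) (specProj B b) :=
  ((h.cfc_real _).symm.cfc_real _).symm

lemma Sf_eq_sum_perspective (f : ℝ → ℝ) (ρ σ : Matrix (Fin n) (Fin n) ℂ) :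
    Sf f ρ σ = ∑ a : spectrum ℝ ρ, ∑ b : spectrum ℝ σ,
      perspective f a b * (specProj ρ a * specProj σ b).trace.re := by
  have summand_eq (a b w : ℝ) :
      (if b = 0 then 0 else b * f (a / b) * w) = perspective f a b * w := by
    split_ifs with hb
    · rw [hb, perspective_zero_right, zero_mul]
    · rfl
  simp only [Sf, summand_eq, ← finsum_set_coe_eq_finsum_mem, finsum_eq_sum_of_fintype]

lemma Sf_sq {ρ : Matrix (Fin n) (Fin n) ℂ} (hρ : ρ.IsHermitian) (σ : Matrix (Fin n) (Fin n) ℂ) :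
    Sf (fun t => t ^ 2) ρ σ = (ρ * ρ * cfc (fun x : ℝ => x⁻¹) σ).trace.re := by
  have mul_self_eq : ρ * ρ = cfc (fun x : ℝ => x * x) ρ := by
    rw [cfc_mul _ _ ρ (continuousOn_spectrum ρ _) (continuousOn_spectrum ρ _),
      cfc_id' ℝ ρ hρ.isSelfAdjoint]
  have perspective_eq (a b : ℝ) : perspective (fun t => t ^ 2) a b = b⁻¹ * (a * a) := by
    rcases eq_or_ne b 0 with rfl | hb
    · simp
    · rw [perspective]
      field_simp
  simp only [mul_self_eq, cfc_eq_sum_smul_specProj, Fintype.sum_mul_sum, Matrix.trace_sum,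
    Complex.re_sum, Matrix.smul_mul, Matrix.mul_smul, Matrix.trace_smul, Complex.smul_re,
    smul_eq_mul, Sf_eq_sum_perspective, perspective_eq, mul_assoc]

end SpecProj

section MeasuredDivergence

variable {m ι κ : Type*} [Fintype m] [Fintype ι] [Fintype κ]

/-- The classical `f`-divergence `∑ x, Tr(σ P_x) f(Tr(ρ P_x) / Tr(σ P_x))` of the outcome weights
of a measurement `P` on `ρ` and `σ`. -/
noncomputable def measuredDivergence (f : ℝ → ℝ) (ρ σ : Matrix m m ℂ)
    (P : ι → Matrix m m ℂ) : ℝ :=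
  ∑ x, perspective f (ρ * P x).trace.re (σ * P x).trace.re

variable [DecidableEq m] {ρ σ : Matrix m m ℂ} {a b : ι → ℝ} {E : ι → Matrix m m ℂ}

lemma measuredDivergence_spectralResolution (f : ℝ → ℝ) (hρE : IsSpectralResolution ρ a E)
    (hσE : IsSpectralResolution σ b E) :
    measuredDivergence f ρ σ E = ∑ i, perspective f (a i) (b i) * (E i).trace.re := by
  simp only [measuredDivergence, hρE.mul_proj, hσE.mul_proj, Matrix.trace_smul, Complex.smul_re,
    smul_eq_mul, perspective_mul_mul]

theorem measuredDivergence_le_spectralResolution {f : ℝ → ℝ} (hf : ConvexOn ℝ (Set.Ici 0) f)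
    (hρE : IsSpectralResolution ρ a E) (hσE : IsSpectralResolution σ b E)
    (ha : ∀ i, 0 ≤ a i) (hb : ∀ i, 0 ≤ b i)
    (hker : ∀ v : m → ℂ, σ *ᵥ v = 0 → ρ *ᵥ v = 0)
    {P : κ → Matrix m m ℂ} (hP : ∀ x, (P x).PosSemidef) (hPsum : ∑ x, P x = 1) :
    measuredDivergence f ρ σ P ≤ measuredDivergence f ρ σ E := by
  have overlap_nonneg (i : ι) (x : κ) : 0 ≤ (E i * P x).trace.re :=
    (Complex.nonneg_iff.1 (trace_mul_nonneg (hρE.posSemidef i) (hP x))).1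
  have weight_eq_zero (i : ι) (x : κ) (h : b i * (E i * P x).trace.re = 0) :
      a i * (E i * P x).trace.re = 0 := by
    rcases mul_eq_zero.1 h with hbi | hoverlap
    · have hρEi : a i • E i = 0 := by
        rw [← hρE.mul_proj]
        exact mul_eq_zero_of_mulVec_ker_le hker (by rw [hσE.mul_proj, hbi, zero_smul])
      rw [← smul_eq_mul, ← Complex.smul_re, ← Matrix.trace_smul, ← Matrix.smul_mul, hρEi,
        Matrix.zero_mul, Matrix.trace_zero, Complex.zero_re]
    · rw [hoverlap, mul_zero]
  calc measuredDivergence f ρ σ P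
      ≤ ∑ x, ∑ i, perspective f (a i) (b i) * (E i * P x).trace.re := by
        refine Finset.sum_le_sum fun x _ => ?_
        simp only [hρE.re_trace_mul, hσE.re_trace_mul, ← perspective_mul_mul]
        exact perspective_sum_le hf (fun i _ => mul_nonneg (hb i) (overlap_nonneg i x))
          (fun i _ => weight_eq_zero i x) fun i _ =>
          div_nonneg (mul_nonneg (ha i) (overlap_nonneg i x))
            (mul_nonneg (hb i) (overlap_nonneg i x))
    _ = ∑ i, perspective f (a i) (b i) * (E i).trace.re := by
        rw [Finset.sum_comm]
        simp only [← Finset.mul_sum, ← Complex.re_sum, ← Matrix.trace_sum, hPsum, mul_one]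
    _ = measuredDivergence f ρ σ E := (measuredDivergence_spectralResolution f hρE hσE).symm

end MeasuredDivergence

section ProjectiveMeasurement

variable {n : ℕ} {ρ σ : Matrix (Fin n) (Fin n) ℂ}

lemma isProjMeas_iff {k : ℕ} {P : Fin k → Matrix (Fin n) (Fin n) ℂ} :
    IsProjMeas P ↔ CompleteOrthogonalIdempotents P ∧ ∀ x, (P x).IsHermitian :=
  ⟨fun ⟨hherm, hidem, hortho, hsum⟩ => ⟨⟨⟨hidem, fun x y => hortho x y⟩, hsum⟩, hherm⟩,
    fun ⟨h, hherm⟩ => ⟨hherm, h.idem, fun _ _ hxy => h.ortho hxy, h.complete⟩⟩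

lemma posSemidef_of_isProjMeas {k : ℕ} {P : Fin k → Matrix (Fin n) (Fin n) ℂ} (hP : IsProjMeas P)
    (x : Fin k) : (P x).PosSemidef :=
  posSemidef_of_isHermitian_of_isIdempotentElem (hP.1 x) (hP.2.1 x)

/-- The set of values of the measured `f`-divergence over all projective measurements, whose
supremum is `SfPr f ρ σ`. -/
def measuredValues (f : ℝ → ℝ) (ρ σ : Matrix (Fin n) (Fin n) ℂ) : Set ℝ :=
  {r | ∃ (k : ℕ) (P : Fin k → Matrix (Fin n) (Fin n) ℂ),
    IsProjMeas P ∧ measuredDivergence f ρ σ P = r}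

lemma SfPr_eq_sSup_measuredValues (f : ℝ → ℝ) (ρ : Matrix (Fin n) (Fin n) ℂ)
    (hσ : σ.PosSemidef) : SfPr f ρ σ = sSup (measuredValues f ρ σ) := by
  have ite_eq_perspective {a b : ℝ} (hb : 0 ≤ b) :
      (if 0 < b then b * f (a / b) else 0) = perspective f a b := by
    rcases hb.eq_or_lt with rfl | hb
    · simp
    · rw [if_pos hb, perspective]
  refine congrArg sSup (Set.ext fun r => exists_congr fun k => exists_congr fun P =>
    and_congr_right fun hP => ?_)
  have weight_nonneg (x : Fin k) : 0 ≤ (σ * P x).trace.re :=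
    (Complex.nonneg_iff.1 (trace_mul_nonneg hσ (posSemidef_of_isProjMeas hP x))).1
  simp only [ite_eq_perspective (weight_nonneg _), measuredDivergence, eq_comm]

lemma measuredDivergence_mem_measuredValues (f : ℝ → ℝ) (ρ σ : Matrix (Fin n) (Fin n) ℂ)
    {ι : Type*} [Fintype ι] {E : ι → Matrix (Fin n) (Fin n) ℂ}
    (hE : CompleteOrthogonalIdempotents E) (hherm : ∀ i, (E i).IsHermitian) :
    measuredDivergence f ρ σ E ∈ measuredValues f ρ σ := by
  let e := (Fintype.equivFin ι).symm
  exact ⟨Fintype.card ι, E ∘ e,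
    isProjMeas_iff.2 ⟨(CompleteOrthogonalIdempotents.equiv e).2 hE, fun x => hherm (e x)⟩,
    Equiv.sum_comp e fun i => perspective f (ρ * E i).trace.re (σ * E i).trace.re⟩

theorem Sf_eq_SfPr_of_commute (hρ : ρ.PosSemidef) (hσ : σ.PosSemidef)
    (hker : ∀ v : Fin n → ℂ, σ *ᵥ v = 0 → ρ *ᵥ v = 0) (hcomm : Commute ρ σ)
    {f : ℝ → ℝ} (hf : ConvexOn ℝ (Set.Ici 0) f) : Sf f ρ σ = SfPr f ρ σ := by
  have specProj_comm (a : spectrum ℝ ρ) (b : spectrum ℝ σ) :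
      Commute (specProj ρ a) (specProj σ b) := commute_specProj hcomm a b
  have hρE := (isSpectralResolution_specProj hρ.1).prod_left
    (isSpectralResolution_specProj hσ.1) specProj_comm
  have hσE := (isSpectralResolution_specProj hρ.1).prod_right
    (isSpectralResolution_specProj hσ.1) specProj_comm
  have Sf_eq_measured := measuredDivergence_spectralResolution f hρE hσE
  rw [Fintype.sum_prod_type, ← Sf_eq_sum_perspective] at Sf_eq_measured
  rw [← Sf_eq_measured, SfPr_eq_sSup_measuredValues f ρ hσ]
  refine (IsGreatest.csSup_eq ⟨measuredDivergence_mem_measuredValues f ρ σ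
    hρE.toCompleteOrthogonalIdempotents hρE.isHermitian, ?_⟩).symm
  rintro _ ⟨k, P, hP, rfl⟩
  exact measuredDivergence_le_spectralResolution hf hρE hσE
    (fun p => nonneg_of_mem_spectrum hρ p.1.2) (fun p => nonneg_of_mem_spectrum hσ p.2.2) hker
    (posSemidef_of_isProjMeas hP) hP.2.2.2

end ProjectiveMeasurement

section Frobenius

open scoped Matrix.Norms.Frobenius

variable {m 𝕜 : Type*} [Fintype m] [RCLike 𝕜]

lemma frobenius_norm_sq_eq_re_trace {l : Type*} [Fintype l] (X : Matrix l m 𝕜) :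
    ‖X‖ ^ 2 = RCLike.re (X * Xᴴ).trace := by
  have norm_sq_sum_nonneg : 0 ≤ ∑ i, ∑ j, ‖X i j‖ ^ (2 : ℝ) := by positivity
  rw [Matrix.frobenius_norm_def, ← Real.sqrt_eq_rpow, Real.sq_sqrt norm_sq_sum_nonneg]
  simp only [Real.rpow_two, Matrix.trace, Matrix.diag_apply, Matrix.mul_apply,
    Matrix.conjTranspose_apply, RCLike.star_def, RCLike.mul_conj, map_sum, ← RCLike.ofReal_pow,
    RCLike.ofReal_re]

lemma frobenius_norm_mul_sq_le {A : Matrix m m 𝕜} (hA : A.PosSemidef) (Z : Matrix m m 𝕜) :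
    ‖Z * A‖ ^ 2 ≤ RCLike.re (Z * A * Zᴴ).trace * RCLike.re A.trace := by
  obtain ⟨B, rfl⟩ := exists_eq_mul_conjTranspose hA
  calc ‖Z * (B * Bᴴ)‖ ^ 2 = ‖Z * B * Bᴴ‖ ^ 2 := by rw [mul_assoc]
    _ ≤ (‖Z * B‖ * ‖Bᴴ‖) ^ 2 := by gcongr; exact Matrix.frobenius_norm_mul _ _
    _ = ‖Z * B‖ ^ 2 * ‖B‖ ^ 2 := by rw [Matrix.frobenius_norm_conjTranspose, mul_pow]
    _ = RCLike.re (Z * (B * Bᴴ) * Zᴴ).trace * RCLike.re (B * Bᴴ).trace := by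
      simp only [frobenius_norm_sq_eq_re_trace, Matrix.conjTranspose_mul, mul_assoc]

lemma frobenius_norm_commutator_le {A B H : Matrix m m 𝕜} (hA : A.IsHermitian)
    (hB : B.IsHermitian) (hH : H.IsHermitian) :
    ‖A * B - B * A‖ ≤ 2 * ‖B‖ * ‖H * B - A‖ := by
  have commutator_eq : A * B - B * A = B * (H * B - A) - (H * B - A)ᴴ * B := by
    rw [Matrix.conjTranspose_sub, Matrix.conjTranspose_mul, hA.eq, hB.eq, hH.eq]
    noncomm_ring
  calc ‖A * B - B * A‖ ≤ ‖B * (H * B - A)‖ + ‖(H * B - A)ᴴ * B‖ := by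
        rw [commutator_eq]
        exact norm_sub_le _ _
    _ ≤ ‖B‖ * ‖H * B - A‖ + ‖(H * B - A)ᴴ‖ * ‖B‖ :=
        add_le_add (Matrix.frobenius_norm_mul _ _) (Matrix.frobenius_norm_mul _ _)
    _ = 2 * ‖B‖ * ‖H * B - A‖ := by
        rw [Matrix.frobenius_norm_conjTranspose]
        ring

end Frobenius

section LikelihoodRatio

variable {m ι : Type*} [Fintype m] [Fintype ι]

/-- The observable taking the value `Tr(ρ P_x) / Tr(σ P_x)` on the outcome `x` of `P`. Among the
observables `H` that are functions of the outcome it minimizes `Tr((H - L) σ (H - L)ᴴ)`, where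
`L = ρ σ⁻¹`. -/
noncomputable def likelihoodRatio (ρ σ : Matrix m m ℂ) (P : ι → Matrix m m ℂ) : Matrix m m ℂ :=
  ∑ x, ((ρ * P x).trace.re / (σ * P x).trace.re) • P x

lemma isHermitian_likelihoodRatio (ρ σ : Matrix m m ℂ) {P : ι → Matrix m m ℂ}
    (hP : ∀ x, (P x).IsHermitian) : (likelihoodRatio ρ σ P).IsHermitian := by
  simp only [likelihoodRatio, Matrix.IsHermitian, Matrix.conjTranspose_sum,
    Matrix.conjTranspose_smul, star_trivial, (hP _).eq]

variable [DecidableEq m]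

lemma measuredDivergence_sq (ρ σ : Matrix m m ℂ) {P : ι → Matrix m m ℂ}
    (hP : OrthogonalIdempotents P) :
    measuredDivergence (fun t => t ^ 2) ρ σ P =
      2 * (ρ * likelihoodRatio ρ σ P).trace.re -
        (σ * (likelihoodRatio ρ σ P * likelihoodRatio ρ σ P)).trace.re := by
  classical
  have likelihoodRatio_mul_self : likelihoodRatio ρ σ P * likelihoodRatio ρ σ P =
      ∑ x, ((ρ * P x).trace.re / (σ * P x).trace.re *
        ((ρ * P x).trace.re / (σ * P x).trace.re)) • P x := by
    simp only [likelihoodRatio, Fintype.sum_mul_sum, Matrix.smul_mul, Matrix.mul_smul, hP.mul_eq,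
      smul_ite, smul_zero, Finset.sum_ite_eq, Finset.mem_univ, if_true, smul_smul]
  rw [likelihoodRatio_mul_self]
  simp only [measuredDivergence, perspective_sq, likelihoodRatio, Matrix.mul_smul,
    Finset.mul_sum, Matrix.trace_sum, Complex.re_sum, Matrix.trace_smul, Complex.smul_re,
    smul_eq_mul, Finset.sum_sub_distrib]

end LikelihoodRatio

section RelativeDensity

variable {m : Type*} [Fintype m] [DecidableEq m] {ρ σ : Matrix m m ℂ}

/-- The density `ρ σ⁻¹` of `ρ` relative to `σ`. As `0⁻¹ = 0`, the inverse is the pseudo-inverse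
when `σ` is singular. -/
noncomputable def relativeDensity (ρ σ : Matrix m m ℂ) : Matrix m m ℂ :=
  ρ * cfc (fun x : ℝ => x⁻¹) σ

lemma relativeDensity_mul (hσ : σ.IsHermitian)
    (hker : ∀ v : m → ℂ, σ *ᵥ v = 0 → ρ *ᵥ v = 0) : relativeDensity ρ σ * σ = ρ := by
  rw [relativeDensity, mul_assoc, ← sub_eq_zero, ← mul_sub_one]
  refine mul_eq_zero_of_mulVec_ker_le hker ?_
  rw [mul_sub_one, ← mul_assoc, mul_cfc_inv_mul hσ, sub_self]

end RelativeDensity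

lemma re_trace_sub_mul_mul_sub {m : Type*} [Fintype m] {ρ σ H L : Matrix m m ℂ}
    (hρ : ρ.IsHermitian) (hσ : σ.IsHermitian) (hH : H.IsHermitian) (hL : L * σ = ρ) :
    ((H - L) * σ * (H - L)ᴴ).trace.re =
      (L * ρ).trace.re - (2 * (ρ * H).trace.re - (σ * (H * H)).trace.re) := by
  have hL' : σ * Lᴴ = ρ := by
    rw [← hσ.eq, ← Matrix.conjTranspose_mul, hL, hρ.eq]
  have expansion : (H - L) * σ * (H - L)ᴴ = H * σ * H - H * ρ - ρ * H + L * ρ := by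
    calc (H - L) * σ * (H - L)ᴴ
        = H * σ * H - H * (σ * Lᴴ) - L * σ * H + L * (σ * Lᴴ) := by
          rw [Matrix.conjTranspose_sub, hH.eq]
          noncomm_ring
      _ = H * σ * H - H * ρ - ρ * H + L * ρ := by rw [hL', hL]
  have cyclic : (H * σ * H).trace = (σ * (H * H)).trace := by
    rw [mul_assoc, Matrix.trace_mul_comm, mul_assoc]
  rw [expansion, Matrix.trace_add, Matrix.trace_sub, Matrix.trace_sub, cyclic,
    Matrix.trace_mul_comm H ρ]
  simp only [Complex.add_re, Complex.sub_re]
  ring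

section QuadraticGap

open scoped Matrix.Norms.Frobenius

variable {n : ℕ} {ρ σ : Matrix (Fin n) (Fin n) ℂ}

theorem Sf_sq_sub_measuredDivergence_sq (hρ : ρ.IsHermitian) (hσ : σ.IsHermitian)
    (hker : ∀ v : Fin n → ℂ, σ *ᵥ v = 0 → ρ *ᵥ v = 0) {ι : Type*} [Fintype ι]
    {P : ι → Matrix (Fin n) (Fin n) ℂ} (hP : OrthogonalIdempotents P)
    (hherm : ∀ x, (P x).IsHermitian) :
    Sf (fun t => t ^ 2) ρ σ - measuredDivergence (fun t => t ^ 2) ρ σ P =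
      ((likelihoodRatio ρ σ P - relativeDensity ρ σ) * σ *
        (likelihoodRatio ρ σ P - relativeDensity ρ σ)ᴴ).trace.re := by
  rw [re_trace_sub_mul_mul_sub hρ hσ (isHermitian_likelihoodRatio ρ σ hherm)
      (relativeDensity_mul hσ hker), ← measuredDivergence_sq ρ σ hP, Sf_sq hρ, relativeDensity,
    Matrix.trace_mul_comm _ ρ, mul_assoc]

lemma measuredDivergence_sq_le_Sf_sq (hρ : ρ.IsHermitian) (hσ : σ.PosSemidef)
    (hker : ∀ v : Fin n → ℂ, σ *ᵥ v = 0 → ρ *ᵥ v = 0) {ι : Type*} [Fintype ι]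
    {P : ι → Matrix (Fin n) (Fin n) ℂ} (hP : OrthogonalIdempotents P)
    (hherm : ∀ x, (P x).IsHermitian) :
    measuredDivergence (fun t => t ^ 2) ρ σ P ≤ Sf (fun t => t ^ 2) ρ σ := by
  rw [← sub_nonneg, Sf_sq_sub_measuredDivergence_sq hρ hσ.1 hker hP hherm]
  exact (Complex.nonneg_iff.1 (hσ.mul_mul_conjTranspose_same _).trace_nonneg).1

lemma norm_commutator_sq_le_measuredDivergence_gap (hρ : ρ.IsHermitian) (hσ : σ.PosSemidef)
    (hker : ∀ v : Fin n → ℂ, σ *ᵥ v = 0 → ρ *ᵥ v = 0) {ι : Type*} [Fintype ι]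
    {P : ι → Matrix (Fin n) (Fin n) ℂ} (hP : OrthogonalIdempotents P)
    (hherm : ∀ x, (P x).IsHermitian) :
    ‖ρ * σ - σ * ρ‖ ^ 2 ≤ (2 * ‖σ‖) ^ 2 *
      ((Sf (fun t => t ^ 2) ρ σ - measuredDivergence (fun t => t ^ 2) ρ σ P) * σ.trace.re) := by
  calc ‖ρ * σ - σ * ρ‖ ^ 2
      ≤ (2 * ‖σ‖ * ‖likelihoodRatio ρ σ P * σ - ρ‖) ^ 2 := by
        gcongr
        exact frobenius_norm_commutator_le hρ hσ.1 (isHermitian_likelihoodRatio ρ σ hherm)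
    _ = (2 * ‖σ‖) ^ 2 * ‖(likelihoodRatio ρ σ P - relativeDensity ρ σ) * σ‖ ^ 2 := by
        rw [mul_pow, sub_mul, relativeDensity_mul hσ.1 hker]
    _ ≤ _ := by
        rw [Sf_sq_sub_measuredDivergence_sq hρ hσ.1 hker hP hherm]
        gcongr
        exact frobenius_norm_mul_sq_le hσ _

theorem norm_commutator_sq_le_SfPr_gap (hρ : ρ.IsHermitian) (hσ : σ.PosSemidef)
    (hker : ∀ v : Fin n → ℂ, σ *ᵥ v = 0 → ρ *ᵥ v = 0) :
    ‖ρ * σ - σ * ρ‖ ^ 2 ≤ (2 * ‖σ‖) ^ 2 *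
      ((Sf (fun t => t ^ 2) ρ σ - SfPr (fun t => t ^ 2) ρ σ) * σ.trace.re) := by
  let bound (r : ℝ) : ℝ := (2 * ‖σ‖) ^ 2 * ((Sf (fun t => t ^ 2) ρ σ - r) * σ.trace.re)
  have nonempty : (measuredValues (fun t => t ^ 2) ρ σ).Nonempty :=
    ⟨_, measuredDivergence_mem_measuredValues _ ρ σ
      (isSpectralResolution_specProj hρ).toCompleteOrthogonalIdempotents
      (isSpectralResolution_specProj hρ).isHermitian⟩
  have bddAbove : BddAbove (measuredValues (fun t => t ^ 2) ρ σ) := by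
    refine ⟨Sf (fun t => t ^ 2) ρ σ, ?_⟩
    rintro _ ⟨k, P, hP, rfl⟩
    obtain ⟨hPidem, hherm⟩ := isProjMeas_iff.1 hP
    exact measuredDivergence_sq_le_Sf_sq hρ hσ hker hPidem.toOrthogonalIdempotents hherm
  have le_bound : measuredValues (fun t => t ^ 2) ρ σ ⊆ {r | ‖ρ * σ - σ * ρ‖ ^ 2 ≤ bound r} := by
    rintro _ ⟨k, P, hP, rfl⟩
    obtain ⟨hPidem, hherm⟩ := isProjMeas_iff.1 hP
    exact norm_commutator_sq_le_measuredDivergence_gap hρ hσ hker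
      hPidem.toOrthogonalIdempotents hherm
  have isClosed_bound : IsClosed {r | ‖ρ * σ - σ * ρ‖ ^ 2 ≤ bound r} :=
    isClosed_le continuous_const (by fun_prop)
  rw [SfPr_eq_sSup_measuredValues _ ρ hσ]
  exact closure_minimal le_bound isClosed_bound (csSup_mem_closure nonempty bddAbove)

theorem commute_of_Sf_sq_eq_SfPr_sq (hρ : ρ.IsHermitian) (hσ : σ.PosSemidef)
    (hker : ∀ v : Fin n → ℂ, σ *ᵥ v = 0 → ρ *ᵥ v = 0)
    (h : Sf (fun t => t ^ 2) ρ σ = SfPr (fun t => t ^ 2) ρ σ) : Commute ρ σ := by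
  have commutator_le := norm_commutator_sq_le_SfPr_gap hρ hσ hker
  rw [h, sub_self, zero_mul, mul_zero, sq_nonpos_iff, norm_eq_zero, sub_eq_zero] at commutator_le
  exact commutator_le

end QuadraticGap

theorem stmt4_general {n : ℕ} (ρ σ : Matrix (Fin n) (Fin n) ℂ)
    (hρ : ρ.PosSemidef) (hσ : σ.PosSemidef)
    (hsupp : ∀ v : Fin n → ℂ, σ *ᵥ v = 0 → ρ *ᵥ v = 0) :
    [ρ * σ = σ * ρ,
      ∀ f : ℝ → ℝ, ConvexOn ℝ (Set.Ici (0 : ℝ)) f → Sf f ρ σ = SfPr f ρ σ,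
      Sf (fun t => t ^ 2) ρ σ = SfPr (fun t => t ^ 2) ρ σ].TFAE := by
  tfae_have 1 → 2 := fun hcomm _ hf => Sf_eq_SfPr_of_commute hρ hσ hsupp hcomm hf
  tfae_have 2 → 3 := fun h => h _ (convexOn_pow 2)
  tfae_have 3 → 1 := fun h => commute_of_Sf_sq_eq_SfPr_sq hρ.1 hσ hsupp h
  tfae_finish

/-- for positive semidefinite `ρ, σ` with `supp ρ ⊆ supp σ`, `ρ` and `σ`
commute if and only if `S_f(ρ‖σ) = S_f^{pr}(ρ‖σ)` for every continuous convex
`f : [0,∞) → ℝ`. -/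
theorem stmt4 {n : ℕ} (ρ σ : Matrix (Fin n) (Fin n) ℂ)
    (hρ : ρ.PosSemidef) (hσ : σ.PosSemidef)
    (hsupp : ∀ v : Fin n → ℂ, σ *ᵥ v = 0 → ρ *ᵥ v = 0) :
    ρ * σ = σ * ρ ↔
      (∀ f : ℝ → ℝ, ContinuousOn f (Set.Ici (0 : ℝ)) →
        ConvexOn ℝ (Set.Ici (0 : ℝ)) f → Sf f ρ σ = SfPr f ρ σ) := by
  have general := stmt4_general ρ σ hρ hσ hsupp
  exact ⟨fun hcomm f _ => (general.out 0 1 :).1 hcomm f,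
    fun h => (general.out 0 2 :).2 (h _ (by fun_prop) (convexOn_pow 2))⟩
end
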